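/- arXiv:math/0312087 — 2 statements merged into one kernel-verified Lean document; each statement's English description precedes it below -/
import Mathlib

section
/- Let R be a commutative Noetherian ring, let d be a natural number, and suppose that R has injective dimension at most d as a module over itself. Then every R-module M of finite flat dimension has projective dimension at most d. -/
/-!
If `R` is a commutative Noetherian ring of injective dimension at most `d` as a module
over itself, then every `R`-module of finite flat dimension has projective dimension
at most `d`.
-/

universe u

open CategoryTheory

/-- `M` has flat dimension at most `n`: there is an exact sequence
`0 → F_n → ⋯ → F_0 → M → 0` with every `F_i` flat (encoded as a flat resolution
which vanishes in degrees `> n`). -/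
def HasFlatDimLE (R : Type u) [CommRing R] (M : Type u) [AddCommGroup M] [Module R M]
    (n : ℕ) : Prop :=
  ∃ (F : ℕ → ModuleCat.{u} R) (d : ∀ i : ℕ, F (i + 1) →ₗ[R] F i) (ε : F 0 →ₗ[R] M),
    (∀ i, Module.Flat R (F i)) ∧ (∀ i, n < i → Subsingleton (F i)) ∧
    Function.Surjective ε ∧ LinearMap.range (d 0) = LinearMap.ker ε ∧
    ∀ i, LinearMap.range (d (i + 1)) = LinearMap.ker (d i)

/-- `M` has projective dimension at most `n`: there is an exact sequence
`0 → P_n → ⋯ → P_0 → M → 0` with every `P_i` projective. -/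
def HasProjDimLE (R : Type u) [CommRing R] (M : Type u) [AddCommGroup M] [Module R M]
    (n : ℕ) : Prop :=
  ∃ (P : ℕ → ModuleCat.{u} R) (d : ∀ i : ℕ, P (i + 1) →ₗ[R] P i) (ε : P 0 →ₗ[R] M),
    (∀ i, Module.Projective R (P i)) ∧ (∀ i, n < i → Subsingleton (P i)) ∧
    Function.Surjective ε ∧ LinearMap.range (d 0) = LinearMap.ker ε ∧
    ∀ i, LinearMap.range (d (i + 1)) = LinearMap.ker (d i)

/-- `M` has injective dimension at most `n`: there is an exact sequence
`0 → M → I^0 → ⋯ → I^n → 0` with every `I^i` injective. -/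
def HasInjDimLE (R : Type u) [CommRing R] (M : Type u) [AddCommGroup M] [Module R M]
    (n : ℕ) : Prop :=
  ∃ (I : ℕ → ModuleCat.{u} R) (d : ∀ i : ℕ, I i →ₗ[R] I (i + 1)) (ι : M →ₗ[R] I 0),
    (∀ i, Module.Injective R (I i)) ∧ (∀ i, n < i → Subsingleton (I i)) ∧
    Function.Injective ι ∧ LinearMap.range ι = LinearMap.ker (d 0) ∧
    ∀ i, LinearMap.range (d i) = LinearMap.ker (d (i + 1))

namespace GorFlat

section PD

variable {R : Type u} [CommRing R]

/-- Projective dimension `< n`, for unbundled modules. -/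
abbrev PD (R : Type u) [CommRing R] (M : Type u) [AddCommGroup M] [Module R M] (n : ℕ) : Prop :=
  HasProjectiveDimensionLT (ModuleCat.of R M) n

/-- Injective dimension `< n`, for unbundled modules. -/
abbrev ID (R : Type u) [CommRing R] (M : Type u) [AddCommGroup M] [Module R M] (n : ℕ) : Prop :=
  HasInjectiveDimensionLT (ModuleCat.of R M) n

variable {A B C : Type u} [AddCommGroup A] [Module R A] [AddCommGroup B] [Module R B]
  [AddCommGroup C] [Module R C]

lemma PD.of_equiv (e : A ≃ₗ[R] B) {n : ℕ} (h : PD R A n) : PD R B n :=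
  hasProjectiveDimensionLT_of_iso e.toModuleIso n

lemma ID.of_equiv (e : A ≃ₗ[R] B) {n : ℕ} (h : ID R A n) : ID R B n :=
  hasInjectiveDimensionLT_of_iso e.toModuleIso n

lemma PD.mono {n m : ℕ} (h : PD R A n) (hnm : n ≤ m) : PD R A m :=
  hasProjectiveDimensionLT_of_ge _ n m hnm

lemma pd_one_iff : PD R A 1 ↔ Module.Projective R A := by
  rw [IsProjective.iff_projective]
  exact projective_iff_hasProjectiveDimensionLT_one.symm

lemma id_one_iff : ID R A 1 ↔ Module.Injective R A := by
  rw [Module.injective_iff_injective_object]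
  exact injective_iff_hasInjectiveDimensionLT_one.symm

lemma exists_ses (f : A →ₗ[R] B) (g : B →ₗ[R] C) (hf : Function.Injective f)
    (hg : Function.Surjective g) (h : LinearMap.range f = LinearMap.ker g) :
    ∃ w : ModuleCat.ofHom f ≫ ModuleCat.ofHom g = 0,
    (ShortComplex.mk (ModuleCat.ofHom f) (ModuleCat.ofHom g) w).ShortExact := by
  have hex : Function.Exact f g := LinearMap.exact_iff.mpr h.symm
  refine ⟨?_, ?_⟩
  · ext x
    exact hex.apply_apply_eq_zero x
  · exact ModuleCat.shortComplex_shortExact _ hex hf hg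

lemma PD.x2 (f : A →ₗ[R] B) (g : B →ₗ[R] C) (hf : Function.Injective f)
    (hg : Function.Surjective g) (h : LinearMap.range f = LinearMap.ker g) {n : ℕ}
    (h1 : PD R A n) (h3 : PD R C n) : PD R B n := by
  obtain ⟨w, hS⟩ := exists_ses f g hf hg h
  exact hS.hasProjectiveDimensionLT_X₂ n h1 h3

lemma PD.x3 (f : A →ₗ[R] B) (g : B →ₗ[R] C) (hf : Function.Injective f)
    (hg : Function.Surjective g) (h : LinearMap.range f = LinearMap.ker g) {n : ℕ}
    (h1 : PD R A n) (h2 : PD R B (n + 1)) : PD R C (n + 1) := by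
  obtain ⟨w, hS⟩ := exists_ses f g hf hg h
  exact hS.hasProjectiveDimensionLT_X₃ n h1 h2

lemma PD.x1 (f : A →ₗ[R] B) (g : B →ₗ[R] C) (hf : Function.Injective f)
    (hg : Function.Surjective g) (h : LinearMap.range f = LinearMap.ker g) {n : ℕ}
    (h2 : PD R B n) (h3 : PD R C (n + 1)) : PD R A n := by
  obtain ⟨w, hS⟩ := exists_ses f g hf hg h
  exact hS.hasProjectiveDimensionLT_X₁ n h2 h3

lemma ID.x1 (f : A →ₗ[R] B) (g : B →ₗ[R] C) (hf : Function.Injective f)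
    (hg : Function.Surjective g) (h : LinearMap.range f = LinearMap.ker g) {n : ℕ}
    (h3 : ID R C n) (h2 : ID R B (n + 1)) : ID R A (n + 1) := by
  obtain ⟨w, hS⟩ := exists_ses f g hf hg h
  exact hS.hasInjectiveDimensionLT_X₁ n h3 h2

end PD

section Dim

variable {R : Type u} [CommRing R]

lemma ID.of_hasInjDimLE {M : Type u} [AddCommGroup M] [Module R M] {n : ℕ}
    (h : HasInjDimLE R M n) : ID R M (n + 1) := by
  induction n generalizing M with
  | zero =>
    obtain ⟨I, d, ι, hI, hs, hι, h0, hd⟩ := h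
    have := hs 1 (by omega)
    have hsurj : Function.Surjective ι := by
      intro y
      have : y ∈ LinearMap.range ι := by
        rw [h0]; exact Subsingleton.elim _ _
      exact this
    exact ID.of_equiv (LinearEquiv.ofBijective ι ⟨hι, hsurj⟩).symm (id_one_iff.2 (hI 0))
  | succ n ih =>
    obtain ⟨I, d, ι, hI, hs, hι, h0, hd⟩ := h
    have hC : HasInjDimLE R (LinearMap.range (d 0)) n := by
      refine ⟨fun i => I (i + 1), fun i => d (i + 1), (LinearMap.range (d 0)).subtype,
        fun i => hI _, fun i hi => hs _ (by omega), Subtype.val_injective, ?_, fun i => hd _⟩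
      rw [Submodule.range_subtype]; exact hd 0
    refine ID.x1 ι (d 0).rangeRestrict hι (LinearMap.surjective_rangeRestrict _) ?_ (ih hC) ?_
    · rw [LinearMap.ker_rangeRestrict, h0]
    · have := id_one_iff.2 (hI 0)
      exact hasInjectiveDimensionLT_of_ge _ 1 _ (by omega)

/-- The standard free cover. -/
noncomputable abbrev fc (R : Type u) [CommRing R] (M : Type u) [AddCommGroup M] [Module R M] :
    (M →₀ R) →ₗ[R] M := Finsupp.linearCombination R id

lemma fc_surj (M : Type u) [AddCommGroup M] [Module R M] : Function.Surjective (fc R M) :=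
  fun m => ⟨Finsupp.single m 1, by simp⟩

lemma pd_finsupp (X : Type u) (n : ℕ) : PD R (X →₀ R) (n + 1) :=
  PD.mono (pd_one_iff.2 inferInstance) (by omega)

lemma HasProjDimLE.of_pd {M : Type u} [AddCommGroup M] [Module R M] {n : ℕ}
    (h : PD R M (n + 1)) : HasProjDimLE R M n := by
  induction n generalizing M with
  | zero =>
    have := pd_one_iff.1 h
    refine ⟨fun i => match i with
      | 0 => ModuleCat.of R M
      | _ + 1 => ModuleCat.of R PUnit, fun i => 0, LinearMap.id, ?_, ?_, ?_, ?_, ?_⟩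
    · rintro (_ | i)
      · exact this
      · change Module.Projective R PUnit.{u+1}
        infer_instance
    · rintro (_ | i) hi
      · omega
      · change Subsingleton PUnit.{u+1}
        infer_instance
    · exact fun x => ⟨x, rfl⟩
    · rw [LinearMap.range_zero]
      exact (LinearMap.ker_id).symm
    · intro i
      apply Submodule.ext
      intro x
      have hx : x = 0 := Subsingleton.elim (α := PUnit) _ _
      subst hx
      simp
  | succ n ih =>
    have hK : PD R (LinearMap.ker (fc R M)) (n + 1) :=
      PD.x1 (LinearMap.ker (fc R M)).subtype (fc R M) Subtype.val_injective (fc_surj M)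
        (Submodule.range_subtype _) (pd_finsupp M n) h
    obtain ⟨P, d, ε, hP, hs, hε, h0, hd⟩ := ih hK
    refine ⟨fun i => match i with
      | 0 => ModuleCat.of R (M →₀ R)
      | i + 1 => P i, fun i => match i with
        | 0 => (LinearMap.ker (fc R M)).subtype ∘ₗ ε
        | i + 1 => d i, fc R M, ?_, ?_, fc_surj M, ?_, ?_⟩
    · rintro (_ | i)
      · change Module.Projective R (M →₀ R)
        infer_instance
      · exact hP i
    · rintro (_ | i) hi
      · omega
      · exact hs i (by omega)
    · change LinearMap.range ((LinearMap.ker (fc R M)).subtype ∘ₗ ε) = _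
      rw [LinearMap.range_comp, LinearMap.range_eq_top.2 hε, Submodule.map_top,
        Submodule.range_subtype]
    · rintro (_ | i)
      · change LinearMap.range (d 0) = LinearMap.ker ((LinearMap.ker (fc R M)).subtype ∘ₗ ε)
        rw [h0, LinearMap.ker_comp, Submodule.ker_subtype]; rfl
      · exact hd i

lemma pd_of_hasFlatDimLE {m : ℕ}
    (hflat : ∀ (M : Type u) [AddCommGroup M] [Module R M], Module.Flat R M → PD R M m)
    {M : Type u} [AddCommGroup M] [Module R M] {n : ℕ}
    (h : HasFlatDimLE R M n) : ∃ k, PD R M k := by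
  induction n generalizing M with
  | zero =>
    obtain ⟨F, d, ε, hF, hs, hε, h0, hd⟩ := h
    have := hs 1 (by omega)
    have hinj : Function.Injective ε := by
      rw [← LinearMap.ker_eq_bot, ← h0, LinearMap.range_eq_bot]
      ext x
      rw [Subsingleton.elim x 0]; simp
    exact ⟨m, PD.of_equiv (LinearEquiv.ofBijective ε ⟨hinj, hε⟩) (hflat _ (hF 0))⟩
  | succ n ih =>
    obtain ⟨F, d, ε, hF, hs, hε, h0, hd⟩ := h
    have hC : HasFlatDimLE R (LinearMap.range (d 0)) n :=
      ⟨fun i => F (i + 1), fun i => d (i + 1), (d 0).rangeRestrict,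
        fun i => hF _, fun i hi => hs _ (by omega), LinearMap.surjective_rangeRestrict _,
        by rw [LinearMap.ker_rangeRestrict]; exact hd 0, fun i => hd _⟩
    obtain ⟨k, hk⟩ := ih hC
    refine ⟨max k m + 1, PD.x3 (LinearMap.range (d 0)).subtype ε Subtype.val_injective hε ?_
      (hk.mono (by omega)) ((hflat _ (hF 0)).mono (by omega))⟩
    rw [Submodule.range_subtype, h0]

lemma baer_finsupp [IsNoetherianRing R] {X : Type u} {Q : Type u} [AddCommGroup Q] [Module R Q]
    (hQ : Module.Baer R Q) : Module.Baer R (X →₀ Q) := by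
  classical
  intro I g
  obtain ⟨s, hs⟩ : (LinearMap.range g).FG := by
    have : Module.Finite R I := inferInstance
    rw [LinearMap.range_eq_map]
    exact Module.Finite.fg_top.map g
  let T : Finset X := s.biUnion fun v => v.support
  have hT : ∀ x, x ∉ T → ∀ i, g i x = 0 := by
    intro x hx i
    have : LinearMap.range g ≤ LinearMap.ker (Finsupp.lapply (R := R) (M := Q) x) := by
      rw [← hs, Submodule.span_le]
      intro v hv
      by_contra hne
      apply hx
      exact Finset.mem_biUnion.2 ⟨v, hv, Finsupp.mem_support_iff.2 hne⟩
    exact this ⟨i, rfl⟩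
  choose e he using fun x => hQ I (Finsupp.lapply x ∘ₗ g)
  refine ⟨∑ x ∈ T, Finsupp.lsingle x ∘ₗ e x, fun r hr => ?_⟩
  ext x
  have h1 : ∀ y, (e y) r = g ⟨r, hr⟩ y := fun y => he y r hr
  simp only [LinearMap.sum_apply, LinearMap.comp_apply, Finsupp.lsingle_apply, h1,
    Finsupp.finsetSum_apply, Finsupp.single_apply]
  by_cases hx : x ∈ T
  · rw [Finset.sum_eq_single x] <;> simp +contextual [hx]
  · rw [Finset.sum_eq_zero, hT x hx]
    intro y hy
    rw [if_neg]
    rintro rfl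
    exact hx hy

lemma hasInjDimLE_finsupp [IsNoetherianRing R] {d : ℕ} (h : HasInjDimLE R R d) (X : Type u) :
    HasInjDimLE R (X →₀ R) d := by
  obtain ⟨I, d, ι, hI, hs, hι, h0, hd⟩ := h
  have key : ∀ {A B C : Type u} [AddCommGroup A] [Module R A] [AddCommGroup B] [Module R B]
      [AddCommGroup C] [Module R C] (f : A →ₗ[R] B) (g : B →ₗ[R] C),
      LinearMap.range f = LinearMap.ker g →
      LinearMap.range (Finsupp.mapRange.linearMap (α := X) f) =
        LinearMap.ker (Finsupp.mapRange.linearMap (α := X) g) := by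
    intro A B C _ _ _ _ _ _ f g hfg
    apply le_antisymm
    · rintro _ ⟨a, rfl⟩
      ext x
      have : f (a x) ∈ LinearMap.ker g := hfg ▸ ⟨a x, rfl⟩
      simpa using this
    · intro b hb
      rw [LinearMap.mem_ker] at hb
      have : ∀ x, ∃ a, f a = b x ∧ (b x = 0 → a = 0) := by
        intro x
        by_cases hx : b x = 0
        · exact ⟨0, by simp [hx], fun _ => rfl⟩
        · have hm : b x ∈ LinearMap.range f := by
            rw [hfg, LinearMap.mem_ker]
            simpa using DFunLike.congr_fun hb x
          obtain ⟨a, ha⟩ := hm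
          exact ⟨a, ha, fun h => absurd h hx⟩
      choose a ha ha0 using this
      refine ⟨Finsupp.onFinset b.support a fun x hx => ?_, ?_⟩
      · rw [Finsupp.mem_support_iff]
        exact fun h => hx (ha0 x h)
      · ext x
        simpa using ha x
  refine ⟨fun i => ModuleCat.of R (X →₀ I i), fun i => Finsupp.mapRange.linearMap (d i),
    Finsupp.mapRange.linearMap ι, fun i => ?_, fun i hi => ?_, ?_, key _ _ h0, fun i => key _ _ (hd i)⟩
  · have := Module.Baer.of_injective (hI i)
    exact (baer_finsupp this).injective
  · have := hs i hi
    change Subsingleton (X →₀ I i)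
    infer_instance
  · exact Finsupp.mapRange_injective _ (map_zero ι) hι

lemma ext_key {d m : ℕ} (hm : d + 1 ≤ m) (M : ModuleCat.{u} R)
    (hP : HasProjectiveDimensionLT M (m + 1)) (S : ShortComplex (ModuleCat.{u} R))
    (hS : S.ShortExact) (hI : HasInjectiveDimensionLT S.X₂ (d + 1)) (i : ℕ) (hi : m ≤ i)
    (e : Abelian.Ext.{u} M S.X₃ i) : e = 0 := by
  have h0 : e.comp hS.extClass (rfl : i + 1 = i + 1) = 0 :=
    Abelian.Ext.eq_zero_of_hasProjectiveDimensionLT _ (m + 1) (by omega)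
  obtain ⟨x, hx⟩ := Abelian.Ext.covariant_sequence_exact₃ M hS e rfl h0
  rw [← hx, Abelian.Ext.eq_zero_of_hasInjectiveDimensionLT x (d + 1) (by omega),
      Abelian.Ext.zero_comp]

lemma ext_key' {d m : ℕ} (hm : d + 1 ≤ m) (M : ModuleCat.{u} R)
    (hP : HasProjectiveDimensionLT M (m + 1)) {A B C : Type u} [AddCommGroup A] [Module R A]
    [AddCommGroup B] [Module R B] [AddCommGroup C] [Module R C]
    (f : A →ₗ[R] B) (g : B →ₗ[R] C) (hf : Function.Injective f)
    (hg : Function.Surjective g) (h : LinearMap.range f = LinearMap.ker g)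
    (hI : ID R B (d + 1)) (i : ℕ) (hi : m ≤ i)
    (e : Abelian.Ext.{u} M (ModuleCat.of R C) i) : e = 0 := by
  obtain ⟨w, hS⟩ := exists_ses f g hf hg h
  exact ext_key hm M hP _ hS hI i hi e

lemma ext_key'' {d m : ℕ} (hm : d + 1 ≤ m) (M : ModuleCat.{u} R)
    (hP : HasProjectiveDimensionLT M (m + 1))
    (hI : ∀ X : Type u, ID R (X →₀ R) (d + 1)) (Y : Type u) [AddCommGroup Y] [Module R Y]
    (i : ℕ) (hi : m ≤ i)
    (e : Abelian.Ext.{u} M (ModuleCat.of R Y) i) : e = 0 :=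
  by
  have h1 : Function.Injective (LinearMap.ker (fc R Y)).subtype := Subtype.val_injective
  have h2 : LinearMap.range (LinearMap.ker (fc R Y)).subtype = LinearMap.ker (fc R Y) :=
    Submodule.range_subtype _
  have h3 := hI Y
  have h4 := fc_surj (R := R) Y
  generalize fc R Y = g at *
  have := ext_key' (A := LinearMap.ker g) (B := Y →₀ R) (C := Y) hm M hP (LinearMap.ker g).subtype g h1 h4 h2 h3 i hi e
  exact this

lemma pd_step {d m : ℕ} (hm : d + 1 ≤ m)
    (M : ModuleCat.{u} R) (hP : HasProjectiveDimensionLT M (m + 1))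
    (hI : ∀ X : Type u, ID R (X →₀ R) (d + 1)) : HasProjectiveDimensionLT M m :=
  (hasProjectiveDimensionLT_iff.{u} M m).2 fun i hi Y e => ext_key'' hm M hP hI Y i hi e

lemma pd_finitistic [IsNoetherianRing R] {d : ℕ} (h : HasInjDimLE R R d)
    {M : Type u} [AddCommGroup M] [Module R M] {n : ℕ} (hM : PD R M n) : PD R M (d + 1) := by
  have step : ∀ m, d + 1 ≤ m → PD R M (m + 1) → PD R M m := by
    intro m hm hP
    exact pd_step hm _ hP fun X => ID.of_hasInjDimLE (hasInjDimLE_finsupp h X)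
  induction n with
  | zero => exact hM.mono (by omega)
  | succ n ih =>
    by_cases hn : d + 1 ≤ n
    · exact ih (step n hn hM)
    · exact hM.mono (by omega)

end Dim

section Chain

variable {R : Type u} [CommRing R]

lemma nonempty_mapEquiv {N P Q : Type u} [AddCommGroup N] [Module R N] [AddCommGroup P] [Module R P]
    [AddCommGroup Q] [Module R Q] (B : Submodule R N) (f : N →ₗ[R] P) (g : N →ₗ[R] Q)
    (h : ∀ b ∈ B, f b = 0 ↔ g b = 0) : Nonempty (B.map f ≃ₗ[R] B.map g) := by
  have e1 := (f.submoduleMap B).quotKerEquivOfSurjective (f.submoduleMap_surjective B)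
  have e2 := (g.submoduleMap B).quotKerEquivOfSurjective (g.submoduleMap_surjective B)
  have hk : LinearMap.ker (f.submoduleMap B) = LinearMap.ker (g.submoduleMap B) := by
    ext b
    rw [LinearMap.mem_ker, LinearMap.mem_ker, Subtype.ext_iff, Subtype.ext_iff]
    exact h b b.2
  exact ⟨e1.symm.trans ((Submodule.quotEquivOfEq _ _ hk).trans e2)⟩

lemma pd_map {N P : Type u} [AddCommGroup N] [Module R N] [AddCommGroup P] [Module R P]
    (A B : Submodule R N) (φ : N →ₗ[R] P) (h : ∀ b ∈ B, φ b = 0 ↔ b ∈ A) {n : ℕ}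
    (hP : PD R (B.map φ) n) : PD R (B.map A.mkQ) n := by
  obtain ⟨e⟩ := nonempty_mapEquiv B φ A.mkQ (fun b hb => by
    rw [h b hb, ← LinearMap.mem_ker, Submodule.ker_mkQ])
  exact PD.of_equiv (A := B.map φ) (B := B.map A.mkQ) e hP

lemma proj_of_chain {K : Type u} [AddCommGroup K] [Module R K] {ι : Type u} [LinearOrder ι]
    [WellFoundedLT ι] (A B : ι → Submodule R K)
    (hBA : ∀ x y, x < y → B x ≤ A y) (hA : ∀ x, ∀ k ∈ A x, k = 0 ∨ ∃ y < x, k ∈ B y)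
    (hK : ∀ k : K, k = 0 ∨ ∃ x, k ∈ B x)
    (hQ : ∀ x, Module.Projective R ((B x).map (A x).mkQ)) : Module.Projective R K := by
  classical
  have hs : ∀ x, ∃ s : (B x).map (A x).mkQ →ₗ[R] B x,
      ((A x).mkQ.submoduleMap (B x)) ∘ₗ s = LinearMap.id := fun x =>
    Module.projective_lifting_property _ _ ((A x).mkQ.submoduleMap_surjective (B x))
  choose s hs using hs
  let Φ : (DirectSum ι fun x => (B x).map (A x).mkQ) →ₗ[R] K :=
    DirectSum.toModule R ι K fun x => (B x).subtype ∘ₗ s x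
  have hs' : ∀ x (q : (B x).map (A x).mkQ), (A x).mkQ (s x q : K) = q := by
    intro x q
    have := LinearMap.congr_fun (hs x) q
    exact congrArg Subtype.val this
  have hlof : ∀ x q, Φ (DirectSum.lof R ι _ x q) = (s x q : K) := by
    intro x q
    simp [Φ]
  have hsurj' : ∀ x, ∀ k ∈ B x, k ∈ LinearMap.range Φ := by
    intro x
    induction x using WellFoundedLT.induction with
    | ind x ih =>
      intro k hk
      let q : (B x).map (A x).mkQ := ⟨(A x).mkQ k, Submodule.mem_map_of_mem hk⟩
      have hd : k - s x q ∈ A x := by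
        refine (Submodule.Quotient.mk_eq_zero (A x)).1 ?_
        change (A x).mkQ (k - s x q) = 0
        rw [map_sub, hs', sub_self]
      have h1 : k - s x q ∈ LinearMap.range Φ := by
        rcases hA x _ hd with h0 | ⟨y, hy, hky⟩
        · rw [h0]; exact zero_mem _
        · exact ih y hy _ hky
      have h2 : (s x q : K) ∈ LinearMap.range Φ := ⟨_, hlof x q⟩
      simpa using add_mem h1 h2
  have hsurj : Function.Surjective Φ := by
    intro k
    rcases hK k with rfl | ⟨x, hx⟩
    · exact ⟨0, map_zero _⟩
    · exact hsurj' x k hx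
  have hinj : Function.Injective Φ := by
    rw [injective_iff_map_eq_zero]
    intro v hv
    by_contra hne
    have hsupp : (DFinsupp.support v).Nonempty := by
      rw [Finset.nonempty_iff_ne_empty, Ne, DFinsupp.support_eq_empty]
      exact hne
    let x := (DFinsupp.support v).max' hsupp
    have hx : x ∈ DFinsupp.support v := Finset.max'_mem _ _
    have hsum : Φ v = ∑ y ∈ DFinsupp.support v, (s y (v y) : K) := by
      conv_lhs => rw [← DirectSum.sum_support_of v]
      rw [map_sum]
      exact Finset.sum_congr rfl fun y _ => hlof y (v y)
    rw [← Finset.add_sum_erase _ _ hx] at hsum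
    have hrest : ∑ y ∈ (DFinsupp.support v).erase x, (s y (v y) : K) ∈ A x := by
      refine Submodule.sum_mem _ fun y hy => ?_
      rw [Finset.mem_erase] at hy
      have : y < x := lt_of_le_of_ne (Finset.le_max' _ _ hy.2) hy.1
      exact hBA y x this (s y (v y)).2
    have h0 : (s x (v x) : K) ∈ A x := by
      rw [hv] at hsum
      rw [eq_neg_of_add_eq_zero_left hsum.symm]
      exact neg_mem hrest
    have h1 : (A x).mkQ (s x (v x) : K) = 0 := by
      rw [← LinearMap.mem_ker, Submodule.ker_mkQ]; exact h0
    rw [hs'] at h1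
    exact (DFinsupp.mem_support_iff.1 hx) (Subtype.ext h1)
  exact Module.Projective.of_equiv (LinearEquiv.ofBijective Φ ⟨hinj, hsurj⟩)

/-- the cover by the free module on the nonzero elements -/
noncomputable abbrev nc (R : Type u) [CommRing R] (K : Type u) [AddCommGroup K] [Module R K] :
    ({k : K // k ≠ 0} →₀ R) →ₗ[R] K := Finsupp.linearCombination R Subtype.val

lemma nc_surj_of (K : Type u) [AddCommGroup K] [Module R K] (B : Submodule R K) (k : K)
    (hk : k ∈ B) : ∃ p ∈ Finsupp.supported R R {z : {k : K // k ≠ 0} | (z : K) ∈ B},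
      nc R K p = k := by
  by_cases h : k = 0
  · exact ⟨0, zero_mem _, by simp [h]⟩
  · exact ⟨Finsupp.single ⟨k, h⟩ 1, Finsupp.single_mem_supported R 1 hk, by simp⟩

/-- The submodule of the kernel cut out by a submodule. -/
noncomputable def cut {K : Type u} [AddCommGroup K] [Module R K] (B : Submodule R K) :
    Submodule R (LinearMap.ker (nc R K)) :=
  (Finsupp.supported R R {z : {k : K // k ≠ 0} | (z : K) ∈ B}).comap
    (LinearMap.ker (nc R K)).subtype

lemma cut_mono {K : Type u} [AddCommGroup K] [Module R K] {A B : Submodule R K} (h : A ≤ B) :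
    cut A ≤ cut B :=
  Submodule.comap_mono (Finsupp.supported_mono fun _ hz => h hz)

lemma pd_map_ker {N Q Z : Type u} [AddCommGroup N] [Module R N] [AddCommGroup Q] [Module R Q]
    (A B : Submodule R N) (φ : N →ₗ[R] (Z →₀ R)) (g : (Z →₀ R) →ₗ[R] Q)
    (hg : Function.Surjective g) (hφ : B.map φ = LinearMap.ker g)
    (hk : ∀ b ∈ B, φ b = 0 ↔ b ∈ A) {n : ℕ} (h : PD R Q (n + 2)) :
    PD R (B.map A.mkQ) (n + 1) := by
  refine pd_map A B φ hk ?_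
  rw [hφ]
  exact PD.x1 (A := LinearMap.ker g) (B := Z →₀ R) (C := Q) (LinearMap.ker g).subtype g
    Subtype.val_injective hg (Submodule.range_subtype _) (pd_finsupp Z n) h

lemma exists_cut {K : Type u} [AddCommGroup K] [Module R K] {A B : Submodule R K}
    (hAB : A ≤ B) : ∃ (Z : Type u) (φ : LinearMap.ker (nc R K) →ₗ[R] (Z →₀ R))
      (g : (Z →₀ R) →ₗ[R] B.map A.mkQ), Function.Surjective g ∧
      (cut B).map φ = LinearMap.ker g ∧ ∀ b ∈ cut B, φ b = 0 ↔ b ∈ cut A := by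
  classical
  let Z := {z : {k : K // k ≠ 0} // (z : K) ∈ B ∧ (z : K) ∉ A}
  let r : ({k : K // k ≠ 0} →₀ R) →ₗ[R] (Z →₀ R) := Finsupp.lsubtypeDomain _
  let g' : (Z →₀ R) →ₗ[R] (K ⧸ A) :=
    Finsupp.linearCombination R fun z : Z => A.mkQ (z.1 : K)
  have hgr : ∀ p ∈ Finsupp.supported R R {z : {k : K // k ≠ 0} | (z : K) ∈ B},
      (g' ∘ₗ r) p = (A.mkQ ∘ₗ nc R K) p := by
    intro p hp
    rw [Finsupp.supported_eq_span_single] at hp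
    refine LinearMap.eqOn_span ?_ hp
    rintro _ ⟨z, hz, rfl⟩
    simp only [LinearMap.comp_apply, Finsupp.linearCombination_single, one_smul]
    by_cases hzA : (z : K) ∈ A
    · have h1 : A.mkQ (z : K) = 0 := by
        rw [← LinearMap.mem_ker, Submodule.ker_mkQ]; exact hzA
      have h2 : r (Finsupp.single z 1) = 0 := by
        ext y
        change Finsupp.single z (1 : R) y.1 = 0
        rw [Finsupp.single_apply, if_neg]
        rintro rfl
        exact y.2.2 hzA
      rw [h1, h2, map_zero]
    · have h2 : r (Finsupp.single z 1) = Finsupp.single (⟨z, hz, hzA⟩ : Z) 1 := by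
        ext y
        change Finsupp.single z (1 : R) y.1 = _
        rw [Finsupp.single_apply, Finsupp.single_apply]
        by_cases hzy : z = y.1
        · subst hzy
          simp
        · rw [if_neg hzy, if_neg]
          rintro rfl
          exact hzy rfl
      rw [h2]
      simp [g']
  have hker : ∀ p ∈ Finsupp.supported R R {z : {k : K // k ≠ 0} | (z : K) ∈ B}, r p = 0 ↔
      p ∈ Finsupp.supported R R {z : {k : K // k ≠ 0} | (z : K) ∈ A} := by
    intro p hp
    rw [Finsupp.mem_supported'] at hp ⊢
    constructor
    · intro h0 z hz
      by_cases hzB : (z : K) ∈ B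
      · exact DFunLike.congr_fun h0 (⟨z, hzB, hz⟩ : Z)
      · exact hp z hzB
    · intro h0
      ext y
      exact h0 y.1 y.2.2
  have hg'B : ∀ q, g' q ∈ B.map A.mkQ := by
    intro q
    have : LinearMap.range g' ≤ B.map A.mkQ := by
      rw [Finsupp.range_linearCombination, Submodule.span_le]
      rintro _ ⟨z, rfl⟩
      exact Submodule.mem_map_of_mem z.2.1
    exact this ⟨q, rfl⟩
  let g : (Z →₀ R) →ₗ[R] B.map A.mkQ := g'.codRestrict _ hg'B
  have hg : Function.Surjective g := by
    rintro ⟨_, b, hb, rfl⟩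
    obtain ⟨p, hp, rfl⟩ := nc_surj_of (R := R) K B b hb
    exact ⟨r p, Subtype.ext (hgr p hp)⟩
  let φ : LinearMap.ker (nc R K) →ₗ[R] (Z →₀ R) := r ∘ₗ (LinearMap.ker (nc R K)).subtype
  have hφ : (cut B).map φ = LinearMap.ker g := by
    apply le_antisymm
    · rintro _ ⟨p, hp, rfl⟩
      rw [LinearMap.mem_ker]
      apply Subtype.ext
      have h1 := hgr p.1 hp
      have h2 : nc R K p.1 = 0 := p.2
      change g' (r p.1) = 0
      rw [LinearMap.comp_apply, LinearMap.comp_apply, h2, map_zero] at h1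
      exact h1
    · intro q hq
      have hq' : g' q = 0 := congrArg Subtype.val (LinearMap.mem_ker.1 hq)
      -- lift q to p
      let p : {k : K // k ≠ 0} →₀ R := Finsupp.mapDomain Subtype.val q
      have hrp : r p = q := by
        ext y
        change Finsupp.mapDomain Subtype.val q y.1 = q y
        exact Finsupp.mapDomain_apply Subtype.val_injective _ _
      have hp : p ∈ Finsupp.supported R R {z : {k : K // k ≠ 0} | (z : K) ∈ B} := by
        rw [Finsupp.mem_supported']
        intro z hz
        apply Finsupp.mapDomain_of_notMem_range
        rintro ⟨y, rfl⟩
        exact hz y.2.1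
      have hA : nc R K p ∈ A := by
        have h1 := hgr p hp
        rw [LinearMap.comp_apply, LinearMap.comp_apply, hrp, hq'] at h1
        rw [← Submodule.ker_mkQ A, LinearMap.mem_ker]
        exact h1.symm
      obtain ⟨p', hp', hp'e⟩ := nc_surj_of (R := R) K A _ hA
      have hp'B := Finsupp.supported_mono (R := R) (M := R)
        (fun z (hz : (z : K) ∈ A) => hAB hz :
        {z : {k : K // k ≠ 0} | (z : K) ∈ A} ⊆ {z : {k : K // k ≠ 0} | (z : K) ∈ B}) hp'
      refine ⟨⟨p - p', ?_⟩, ?_, ?_⟩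
      · rw [LinearMap.mem_ker, map_sub, hp'e, sub_self]
      · exact sub_mem hp hp'B
      · change r (p - p') = q
        rw [map_sub, (hker p' hp'B).2 hp', hrp, sub_zero]
  exact ⟨Z, φ, g, hg, hφ, fun b hb => hker b.1 hb⟩

lemma exists_cover (K : Type u) [AddCommGroup K] [Module R K] :
    ∃ (N : Type u) (_ : AddCommGroup N) (_ : Module R N) (X : Type u) (i : N →ₗ[R] (X →₀ R))
      (g : (X →₀ R) →ₗ[R] K) (v : X → K) (c : Submodule R K → Submodule R N),
      Function.Injective i ∧ Function.Surjective g ∧ LinearMap.range i = LinearMap.ker g ∧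
      (∀ x, v x ≠ 0) ∧ (∀ B m, m ∈ c B ↔ ∀ z ∈ (i m).support, v z ∈ B) ∧
      ∀ A B : Submodule R K, A ≤ B → ∃ (Z : Type u) (φ : N →ₗ[R] (Z →₀ R))
      (g : (Z →₀ R) →ₗ[R] B.map A.mkQ), Function.Surjective g ∧
      (c B).map φ = LinearMap.ker g ∧ ∀ b ∈ c B, φ b = 0 ↔ b ∈ c A := by
  refine ⟨LinearMap.ker (nc R K), inferInstance, inferInstance, {k : K // k ≠ 0},
    (LinearMap.ker (nc R K)).subtype, nc R K, Subtype.val, cut, Subtype.val_injective, ?_,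
    Submodule.range_subtype _, fun x => x.2, ?_, fun A B h => exists_cut h⟩
  · intro k
    obtain ⟨p, -, hp⟩ := nc_surj_of (R := R) K ⊤ k trivial
    exact ⟨p, hp⟩
  · intro B m
    change m.1 ∈ Finsupp.supported R R _ ↔ _
    rw [Finsupp.mem_supported]
    rfl

/-- Auslander's lemma. -/
lemma pd_of_chain {n : ℕ} {K : Type u} [AddCommGroup K] [Module R K] {ι : Type u} [LinearOrder ι]
    [WellFoundedLT ι] (A B : ι → Submodule R K) (hAB : ∀ x, A x ≤ B x)
    (hBA : ∀ x y, x < y → B x ≤ A y) (hA : ∀ x, ∀ k ∈ A x, k = 0 ∨ ∃ y < x, k ∈ B y)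
    (hK : ∀ k : K, k = 0 ∨ ∃ x, k ∈ B x)
    (hQ : ∀ x, PD R ((B x).map (A x).mkQ) (n + 1)) : PD R K (n + 1) := by
  induction n generalizing K with
  | zero =>
    exact pd_one_iff.2 (proj_of_chain A B hBA hA hK fun x => pd_one_iff.1 (hQ x))
  | succ n ih =>
    obtain ⟨N, _, _, X, i, g, v, c, hi, hg, hig, hv, hc, hcut⟩ := exists_cover (R := R) K
    have hmono : ∀ x y, x ≤ y → B x ≤ B y := by
      intro x y hxy
      rcases hxy.eq_or_lt with rfl | h
      · exact le_rfl
      · exact (hBA x y h).trans (hAB y)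
    have c_mono : ∀ A B, A ≤ B → c A ≤ c B := fun A B h k hk =>
      (hc B k).2 fun z hz => h ((hc A k).1 hk z hz)
    have hbd : ∀ (s : Set ι) (k : N),
        (∀ z ∈ (i k).support, ∃ y ∈ s, v z ∈ B y) → k = 0 ∨ ∃ y ∈ s, k ∈ c (B y) := by
      intro s k hk
      by_cases hne : (i k).support.Nonempty
      · right
        have : Nonempty ι := by
          obtain ⟨z, hz⟩ := hne
          exact ⟨(hk z hz).choose⟩
        choose! y hys hyB using hk
        obtain ⟨z, hz, hmax⟩ := Finset.exists_max_image (i k).support y hne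
        refine ⟨y z, hys z hz, (hc _ _).2 ?_⟩
        intro w hw
        exact hmono _ _ (hmax w hw) (hyB w hw)
      · left
        rw [Finset.not_nonempty_iff_eq_empty, Finsupp.support_eq_empty] at hne
        exact hi (by rw [hne, map_zero])
    have hker : PD R N (n + 1) := by
      refine ih (fun x => c (A x)) (fun x => c (B x)) (fun x => c_mono _ _ (hAB x))
        (fun x y h => c_mono _ _ (hBA x y h)) ?_ ?_ (fun x => ?_)
      · intro x k hk
        refine hbd (Set.Iio x) k fun z hz => ?_
        have : v z ∈ A x := (hc _ _).1 hk z hz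
        rcases hA x _ this with h0 | h
        · exact absurd h0 (hv z)
        · exact h
      · intro k
        have := hbd Set.univ k fun z hz => by
          rcases hK (v z) with h0 | ⟨x, hx⟩
          · exact absurd h0 (hv z)
          · exact ⟨x, trivial, hx⟩
        simpa using this
      · obtain ⟨Z, φ, g, hg, hφ, hk⟩ := hcut _ _ (hAB x)
        exact pd_map_ker (Q := (B x).map (A x).mkQ) (c (A x)) (c (B x)) φ g hg hφ hk (hQ x)
    exact PD.x3 i g hi hg hig hker (pd_finsupp _ (n + 1))

end Chain
section Countable

variable {R : Type u} [CommRing R] [IsNoetherianRing R]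

lemma exists_retract {F X : Type u} [AddCommGroup F] [Module R F] [Module.Flat R F]
    (π : (X →₀ R) →ₗ[R] F) (hπ : Function.Surjective π) (L : Submodule R (X →₀ R))
    (hL : L.FG) (hLk : L ≤ LinearMap.ker π) :
    ∃ f : (X →₀ R) →ₗ[R] LinearMap.ker π, (∀ k ∈ L, (f k : X →₀ R) = k) ∧
      (LinearMap.range f).FG := by
  classical
  obtain ⟨s, hs⟩ := hL
  let T : Finset X := s.biUnion Finsupp.support
  have hLT : L ≤ Finsupp.supported R R (T : Set X) := by
    rw [← hs, Submodule.span_le]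
    intro p hp
    refine (Finsupp.mem_supported R p).2 fun x hx => ?_
    exact Finset.mem_biUnion.2 ⟨p, hp, hx⟩
  let e : (T →₀ R) →ₗ[R] (X →₀ R) := Finsupp.lmapDomain R R Subtype.val
  let r : (X →₀ R) →ₗ[R] (T →₀ R) := Finsupp.lcomapDomain Subtype.val Subtype.val_injective
  have her : ∀ p ∈ L, e (r p) = p := by
    intro p hp
    have := hLT hp
    refine Finsupp.mapDomain_comapDomain _ Subtype.val_injective _ ?_
    rw [Subtype.range_coe]
    exact this
  have : Module.Finite R L := Module.Finite.of_fg ⟨s, hs⟩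
  obtain ⟨k, a, y, hy, ha⟩ := Module.Flat.exists_factorization_of_comp_eq_zero_of_free
    (K := L) (f := r ∘ₗ L.subtype) (x := π ∘ₗ e) (by
      ext l
      change π (e (r l)) = 0
      rw [her l l.2]
      exact hLk l.2)
  obtain ⟨y', hy'⟩ := Module.projective_lifting_property π y hπ
  let h0 : (T →₀ R) →ₗ[R] (X →₀ R) := e - y' ∘ₗ a
  have hh : ∀ p, h0 p ∈ LinearMap.ker π := by
    intro p
    have h1 := LinearMap.congr_fun hy p
    have h2 := LinearMap.congr_fun hy' (a p)
    simp only [LinearMap.comp_apply] at h1 h2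
    simp only [h0, LinearMap.mem_ker, LinearMap.sub_apply, map_sub, LinearMap.comp_apply]
    rw [h1, h2, sub_self]
  let h : (T →₀ R) →ₗ[R] LinearMap.ker π := h0.codRestrict _ hh
  refine ⟨h ∘ₗ r, ?_, ?_⟩
  · intro p hp
    have h1 : a (r p) = 0 := LinearMap.congr_fun ha ⟨p, hp⟩
    change e (r p) - y' (a (r p)) = p
    rw [h1, map_zero, sub_zero, her p hp]
  · rw [LinearMap.range_comp]
    exact (IsNoetherian.noetherian (LinearMap.range r)).map h

lemma ker_projective {F X : Type u} [Countable X] [AddCommGroup F] [Module R F] [Module.Flat R F]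
    (π : (X →₀ R) →ₗ[R] F) (hπ : Function.Surjective π) :
    Module.Projective R (LinearMap.ker π) := by
  classical
  obtain ⟨en, hen⟩ := exists_injective_nat X
  let T : ℕ → Set X := fun n => {x | en x < n}
  have hT : ∀ n, (T n).Finite := fun n => Set.Finite.preimage hen.injOn (Set.finite_lt_nat n)
  let K : ℕ → Submodule R (X →₀ R) := fun n => LinearMap.ker π ⊓ Finsupp.supported R R (T n)
  have hKfg : ∀ n, (K n).FG := by
    intro n
    have h1 : (Finsupp.supported R R (T n)).FG := by
      rw [Finsupp.supported_eq_span_single]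
      exact Submodule.fg_span ((hT n).image _)
    exact h1.of_le inf_le_right
  have hKm : ∀ k ∈ LinearMap.ker π, ∃ m, ∀ n ≥ m, k ∈ K n := by
    intro k hk
    refine ⟨k.support.sup en + 1, fun n hn => ⟨hk, ?_⟩⟩
    refine (Finsupp.mem_supported R k).2 fun x hx => ?_
    have : en x ≤ k.support.sup en := Finset.le_sup hx
    change en x < n
    omega
  let Ty := {f : (X →₀ R) →ₗ[R] LinearMap.ker π // (LinearMap.range f).FG}
  have hstep : ∀ (n : ℕ) (f : Ty), ∃ f' : Ty, (∀ k ∈ K n, (f'.1 k : X →₀ R) = k) ∧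
      ∀ p, f'.1 (f.1 p) = f.1 p := by
    intro n f
    obtain ⟨f', h1, h2⟩ := exists_retract π hπ
      (K n ⊔ (LinearMap.range f.1).map (LinearMap.ker π).subtype)
      ((hKfg n).sup (f.2.map _)) (sup_le inf_le_left (Submodule.map_subtype_le _ _))
    refine ⟨⟨f', h2⟩, fun k hk => h1 k (Submodule.mem_sup_left hk), fun p => Subtype.ext ?_⟩
    exact h1 _ (Submodule.mem_sup_right ⟨f.1 p, ⟨p, rfl⟩, rfl⟩)
  choose G hG1 hG2 using hstep
  let f0 : Ty := ⟨0, by rw [LinearMap.range_zero]; exact Submodule.fg_bot⟩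
  let f : ℕ → Ty := fun n => Nat.rec f0 (fun n g => G n g) n
  have hf1 : ∀ n, ∀ k ∈ K n, ((f (n + 1)).1 k : X →₀ R) = k := fun n => hG1 n (f n)
  have hf2 : ∀ n p, (f (n + 1)).1 ((f n).1 p) = (f n).1 p := fun n => hG2 n (f n)
  have hfin : ∀ k : LinearMap.ker π, ∃ m, ∀ n, n ∉ Finset.range m →
      (k : X →₀ R) - (f n).1 k = 0 := by
    intro k
    obtain ⟨m, hm⟩ := hKm k k.2
    refine ⟨m + 1, fun n hn => ?_⟩
    rw [Finset.mem_range, not_lt] at hn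
    obtain ⟨n, rfl⟩ : ∃ n', n = n' + 1 := ⟨n - 1, by omega⟩
    rw [hf1 n k (hm n (by omega)), sub_self]
  let σ : LinearMap.ker π →ₗ[R] (ℕ →₀ (X →₀ R)) :=
    { toFun := fun k => Finsupp.ofSupportFinite (fun n => (k : X →₀ R) - (f n).1 k) (by
        obtain ⟨m, hm⟩ := hfin k
        refine (Finset.finite_toSet (Finset.range m)).subset fun n hn => ?_
        by_contra h
        exact hn (hm n h))
      map_add' := by
        intro k l
        refine Finsupp.ext fun n => ?_
        change ((k + l : LinearMap.ker π) : X →₀ R) - ((f n).1 (k + l : LinearMap.ker π))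
          = (k - (f n).1 k) + (l - (f n).1 l)
        rw [Submodule.coe_add, map_add, Submodule.coe_add]
        abel
      map_smul' := by
        intro c k
        refine Finsupp.ext fun n => ?_
        change ((c • k : LinearMap.ker π) : X →₀ R) - ((f n).1 (c • k : LinearMap.ker π))
          = c • ((k : X →₀ R) - (f n).1 k)
        rw [Submodule.coe_smul, map_smul, Submodule.coe_smul, smul_sub] }
  let ρ : (ℕ →₀ (X →₀ R)) →ₗ[R] LinearMap.ker π := Finsupp.lsum R fun n => (f (n + 1)).1
  refine Module.Projective.of_split σ ρ ?_
  refine LinearMap.ext fun k => ?_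
  obtain ⟨m, hm⟩ := hfin k
  have h1 : ρ (σ k) = ∑ n ∈ Finset.range m, (f (n + 1)).1 (σ k n) := by
    refine Finsupp.sum_of_support_subset (σ k) ?_ _ fun n _ => map_zero _
    intro n hn
    by_contra h
    exact (Finsupp.mem_support_iff.1 hn) (hm n h)
  have h2 : ∀ n, (f (n + 1)).1 (σ k n) = (f (n + 1)).1 k - (f n).1 k := by
    intro n
    change (f (n + 1)).1 ((k : X →₀ R) - (f n).1 k) = _
    rw [map_sub, hf2]
  change ρ (σ k) = k
  rw [h1, Finset.sum_congr rfl fun n _ => h2 n, Finset.sum_range_sub (fun n => (f n).1 k)]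
  refine (sub_zero ((f m).1 k)).trans ?_
  exact Subtype.ext (sub_eq_zero.1 (hm m (by simp))).symm

lemma pd_countable {F : Type u} [AddCommGroup F] [Module R F] [Module.Flat R F]
    (S : Set F) (hS : S.Countable) (hspan : Submodule.span R S = ⊤) : PD R F 2 := by
  have : Countable S := hS
  let π : (S →₀ R) →ₗ[R] F := Finsupp.linearCombination R Subtype.val
  have hπ : Function.Surjective π := by
    rw [← LinearMap.range_eq_top, Finsupp.range_linearCombination, Subtype.range_coe, hspan]
  have hK := ker_projective π hπ
  clear_value π
  exact PD.x3 (A := LinearMap.ker π) (B := S →₀ R) (C := F) (LinearMap.ker π).subtype π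
    Subtype.val_injective hπ (Submodule.range_subtype _) (pd_one_iff.2 hK) (pd_finsupp _ 1)

end Countable
section Closure

variable {R : Type u} [CommRing R]

lemma exists_subset_of_finset {F : Type*} {ι : Type*} [LinearOrder ι] (A : ι → Set F)
    (hA : Monotone A) (T : Finset F) (hT : (T : Set F) ⊆ ⋃ i, A i) (hne : T.Nonempty) :
    ∃ i, (T : Set F) ⊆ A i := by
  have h : ∀ t ∈ T, ∃ i, t ∈ A i := fun t ht => Set.mem_iUnion.1 (hT ht)
  obtain ⟨t0, ht0⟩ := hne
  have : Nonempty ι := ⟨(h t0 ht0).choose⟩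
  choose! y hy using h
  obtain ⟨z, hz, hmax⟩ := Finset.exists_max_image T y ⟨t0, ht0⟩
  exact ⟨y z, fun w hw => hA (hmax w hw) (hy w hw)⟩

/-- closed subsets with respect to an operation on finite subsets -/
def Closed {F : Type*} (φ : Finset F → Finset F) (S : Set F) : Prop :=
  ∀ T : Finset F, (T : Set F) ⊆ S → (φ T : Set F) ⊆ S

lemma Closed.iUnion {F : Type*} {φ : Finset F → Finset F} (h0 : φ ∅ = ∅) {ι : Type*}
    [LinearOrder ι] (A : ι → Set F) (hA : Monotone A) (hc : ∀ i, Closed φ (A i)) :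
    Closed φ (⋃ i, A i) := by
  intro T hT
  rcases T.eq_empty_or_nonempty with rfl | hne
  · rw [h0]; simp
  · obtain ⟨i, hi⟩ := exists_subset_of_finset A hA T hT hne
    exact (hc i T hi).trans (Set.subset_iUnion A i)

/-- the closure -/
def clo {F : Type*} (φ : Finset F → Finset F) (S : Set F) : Set F :=
  ⋂₀ {U | S ⊆ U ∧ Closed φ U}

lemma subset_clo {F : Type*} (φ : Finset F → Finset F) (S : Set F) : S ⊆ clo φ S :=
  Set.subset_sInter fun _ hU => hU.1

lemma closed_clo {F : Type*} (φ : Finset F → Finset F) (S : Set F) : Closed φ (clo φ S) :=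
  fun T hT => Set.subset_sInter fun U hU => hU.2 T (hT.trans (Set.sInter_subset_of_mem hU))

lemma clo_mono {F : Type*} (φ : Finset F → Finset F) {S S' : Set F} (h : S ⊆ S') :
    clo φ S ⊆ clo φ S' :=
  Set.sInter_subset_sInter fun _ hU => ⟨h.trans hU.1, hU.2⟩

open Cardinal in
lemma mk_clo_le {F : Type u} {φ : Finset F → Finset F} (h0 : φ ∅ = ∅) (S : Set F)
    {κ : Cardinal.{u}} (hκ : ℵ₀ ≤ κ) (hS : #S ≤ κ) : #(clo φ S) ≤ κ := by
  classical
  let st : Set F → Set F := fun S => S ∪ ⋃ T : Finset S, (φ (T.map (Function.Embedding.subtype _)) : Set F)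
  have hst : ∀ S : Set F, #S ≤ κ → #(st S) ≤ κ := by
    intro S hS
    have hfin : #(Finset S) ≤ κ := by
      rcases finite_or_infinite S with h | h
      · exact (Cardinal.lt_aleph0_of_finite _).le.trans hκ
      · rw [Cardinal.mk_finset_of_infinite]; exact hS
    refine (Cardinal.mk_union_le _ _).trans (Cardinal.add_le_of_le hκ hS ?_)
    refine (Cardinal.mk_iUnion_le_sum_mk).trans ?_
    refine (Cardinal.sum_le_sum _ (fun _ => ℵ₀) fun T => ?_).trans ?_
    · exact (Cardinal.lt_aleph0_of_finite _).le
    · rw [Cardinal.sum_const']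
      exact (mul_le_mul' hfin hκ).trans (Cardinal.mul_eq_self hκ).le
  let s : ℕ → Set F := fun n => st^[n] S
  have hsucc : ∀ n, s (n + 1) = st (s n) := fun n => Function.iterate_succ_apply' st n S
  have hmono : Monotone s := monotone_nat_of_le_succ fun n => by
    rw [hsucc]; exact Set.subset_union_left
  have hcard : ∀ n, #(s n) ≤ κ := by
    intro n
    induction n with
    | zero => exact hS
    | succ n ih => rw [hsucc]; exact hst _ ih
  have hcl : Closed φ (⋃ n, s n) := by
    intro T hT
    rcases T.eq_empty_or_nonempty with rfl | hne
    · rw [h0]; simp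
    · obtain ⟨n, hn⟩ := exists_subset_of_finset s hmono T hT hne
      refine Set.Subset.trans ?_ (Set.subset_iUnion s (n + 1))
      rw [hsucc]
      refine Set.Subset.trans ?_ Set.subset_union_right
      have hT' : (T.subtype (· ∈ s n)).map (Function.Embedding.subtype _) = T :=
        Finset.subtype_map_of_mem fun x hx => hn hx
      intro y hy
      refine Set.mem_iUnion.2 ⟨T.subtype (· ∈ s n), ?_⟩
      rw [hT']
      exact hy
  have hle : clo φ S ⊆ ⋃ n, s n :=
    Set.sInter_subset_of_mem ⟨Set.subset_iUnion s 0, hcl⟩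
  refine (Cardinal.mk_le_mk_of_subset hle).trans ?_
  have h2 := Cardinal.mk_iUnion_le_sum_mk_lift (f := s)
  rw [Cardinal.lift_id'] at h2
  refine h2.trans ((Cardinal.sum_le_sum _ (fun _ => κ) hcard).trans ?_)
  rw [Cardinal.sum_const]
  simp only [Cardinal.mk_nat, Cardinal.lift_aleph0, Cardinal.lift_id']
  exact (mul_le_mul_left hκ κ).trans (Cardinal.mul_eq_self hκ).le

lemma exists_phi [IsNoetherianRing R] (F : Type u) [AddCommGroup F] [Module R F]
    [Module.Flat R F] :
    ∃ φ : Finset F → Finset F, φ ∅ = ∅ ∧ ∀ T : Finset F,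
      ∃ (k : ℕ) (h₂ : Submodule.span R (T : Set F) →ₗ[R] (Fin k →₀ R))
        (h₃ : (Fin k →₀ R) →ₗ[R] F), (Submodule.span R (T : Set F)).subtype = h₃ ∘ₗ h₂ ∧
        LinearMap.range h₃ ≤ Submodule.span R (φ T : Set F) := by
  classical
  have h : ∀ T : Finset F, ∃ U : Finset F, (T = ∅ → U = ∅) ∧
      ∃ (k : ℕ) (h₂ : Submodule.span R (T : Set F) →ₗ[R] (Fin k →₀ R))
        (h₃ : (Fin k →₀ R) →ₗ[R] F), (Submodule.span R (T : Set F)).subtype = h₃ ∘ₗ h₂ ∧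
        LinearMap.range h₃ ≤ Submodule.span R (U : Set F) := by
    intro T
    by_cases hT : T = ∅
    · refine ⟨∅, fun _ => rfl, 0, 0, 0, ?_, ?_⟩
      · refine LinearMap.ext fun ⟨x, hx⟩ => ?_
        subst hT
        simpa using hx
      · rw [LinearMap.range_zero]; exact bot_le
    · have : Module.Finite R (Submodule.span R (T : Set F)) := Module.Finite.of_fg ⟨T, rfl⟩
      have : Module.FinitePresentation R (Submodule.span R (T : Set F)) :=
        Module.finitePresentation_of_finite R _
      obtain ⟨k, h₂, h₃, h⟩ := Module.Flat.exists_factorization_of_finitePresentation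
        (Submodule.span R (T : Set F)).subtype
      obtain ⟨U, hU⟩ := show (LinearMap.range h₃).FG from by
        rw [LinearMap.range_eq_map]
        exact (IsNoetherian.noetherian ⊤).map h₃
      exact ⟨U, fun h => absurd h hT, k, h₂, h₃, h, hU.ge⟩
  choose φ h0 hφ using h
  exact ⟨φ, h0 ∅ rfl, hφ⟩

lemma flat_of_closed {F : Type u} [AddCommGroup F] [Module R F] (φ : Finset F → Finset F)
    (hφ : ∀ T : Finset F,
      ∃ (k : ℕ) (h₂ : Submodule.span R (T : Set F) →ₗ[R] (Fin k →₀ R))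
        (h₃ : (Fin k →₀ R) →ₗ[R] F), (Submodule.span R (T : Set F)).subtype = h₃ ∘ₗ h₂ ∧
        LinearMap.range h₃ ≤ Submodule.span R (φ T : Set F))
    (S : Set F) (hS : Closed φ S) : Module.Flat R (Submodule.span R S) := by
  classical
  refine Module.Flat.of_forall_exists_factorization ?_
  intro l f x hx
  have h1 : ∀ i : Fin l, ∃ T : Finset F, (T : Set F) ⊆ S ∧
      (x (Finsupp.single i 1) : F) ∈ Submodule.span R (T : Set F) := fun i =>
    Submodule.mem_span_finite_of_mem_span (x (Finsupp.single i 1)).2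
  choose T hTS hT using h1
  let T' : Finset F := Finset.univ.biUnion T
  have hT'S : (T' : Set F) ⊆ S := by
    intro y hy
    obtain ⟨i, -, hi⟩ := Finset.mem_biUnion.1 hy
    exact hTS i hi
  have hr : ∀ p, ((Submodule.span R S).subtype ∘ₗ x) p ∈ Submodule.span R (T' : Set F) := by
    intro p
    induction p using Finsupp.induction_linear with
    | zero => rw [map_zero]; exact zero_mem _
    | add p q hp hq => rw [map_add]; exact add_mem hp hq
    | single i r =>
      rw [← mul_one r, ← smul_eq_mul, ← Finsupp.smul_single, map_smul]
      refine Submodule.smul_mem _ _ (Submodule.span_mono ?_ (hT i))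
      intro y hy
      exact Finset.mem_biUnion.2 ⟨i, Finset.mem_univ _, hy⟩
  let x' : (Fin l →₀ R) →ₗ[R] Submodule.span R (T' : Set F) :=
    ((Submodule.span R S).subtype ∘ₗ x).codRestrict _ hr
  obtain ⟨k, h₂, h₃, h, hh⟩ := hφ T'
  let y : (Fin k →₀ R) →ₗ[R] Submodule.span R S :=
    h₃.codRestrict _ fun q => Submodule.span_mono (hS T' hT'S) (hh ⟨q, rfl⟩)
  refine ⟨k, h₂ ∘ₗ x', y, ?_, ?_⟩
  · refine LinearMap.ext fun p => Subtype.ext ?_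
    exact LinearMap.congr_fun h (x' p)
  · have : x' f = 0 := by
      apply Subtype.ext
      change ((x f : Submodule.span R S) : F) = 0
      rw [hx]
      rfl
    rw [LinearMap.comp_apply, this, map_zero]

lemma pd_quot {K : Type u} [AddCommGroup K] [Module R K] (A B : Submodule R K) (hAB : A ≤ B)
    {n : ℕ} (hA : PD R A n) (hB : PD R B (n + 1)) : PD R (B.map A.mkQ) (n + 1) := by
  refine PD.x3 (A := A) (B := B) (C := B.map A.mkQ) (Submodule.inclusion hAB)
    (A.mkQ.submoduleMap B) (Submodule.inclusion_injective hAB) (A.mkQ.submoduleMap_surjective B)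
    ?_ hA hB
  rw [Submodule.range_inclusion]
  ext b
  rw [LinearMap.mem_ker, Subtype.ext_iff]
  change (b : K) ∈ A ↔ A.mkQ b = 0
  rw [← LinearMap.mem_ker, Submodule.ker_mkQ]

open Cardinal in
lemma pd_flat_aux [IsNoetherianRing R] {d : ℕ} (hR : HasInjDimLE R R d) (κ : Cardinal.{u}) :
    ∀ (F : Type u) [AddCommGroup F] [Module R F] (_ : Module.Flat R F) (S : Set F),
      #S = κ → Submodule.span R S = ⊤ → PD R F (d + 1) := by
  induction κ using WellFoundedLT.induction with
  | ind κ ih =>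
  intro F _ _ hF S hSκ hspan
  rcases le_or_gt κ ℵ₀ with hκ | hκ
  · refine pd_finitistic hR (pd_countable S ?_ hspan)
    rw [← Cardinal.le_aleph0_iff_set_countable, hSκ]
    exact hκ
  obtain ⟨φ, h0, hφ⟩ := exists_phi (R := R) F
  have key : ∀ U : Set F, Closed φ U → #U < κ → PD R (Submodule.span R U) (d + 1) := by
    intro U hU hUκ
    refine ih _ (lt_of_le_of_lt ?_ hUκ) (Submodule.span R U) (flat_of_closed φ hφ U hU)
      (Subtype.val ⁻¹' U) rfl (Submodule.span_span_coe_preimage)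
    exact Cardinal.mk_preimage_of_injective _ _ Subtype.val_injective
  obtain ⟨e⟩ : Nonempty (κ.ord.ToType ≃ S) := by
    rw [← Cardinal.eq, Cardinal.mk_ord_toType, hSκ]
  let v : κ.ord.ToType → F := fun i => e i
  have hIio : ∀ x : κ.ord.ToType, #(Set.Iio x) < κ := fun x => Cardinal.mk_Iio_toType_ord_lt x
  have hIic : ∀ x : κ.ord.ToType, #(Set.Iic x) < κ := by
    intro x
    rw [← Set.Iio_insert]
    refine (Cardinal.mk_insert_le).trans_lt ?_
    exact Cardinal.add_lt_of_lt hκ.le (hIio x) (Cardinal.one_lt_aleph0.trans hκ)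
  have hclo : ∀ s : Set κ.ord.ToType, #s < κ → #(clo φ (v '' s)) < κ := by
    intro s hs
    refine (mk_clo_le h0 (v '' s) (le_max_left ℵ₀ #s)
      (Cardinal.mk_image_le.trans (le_max_right _ _))).trans_lt (max_lt hκ hs)
  let Bs : κ.ord.ToType → Set F := fun x => clo φ (v '' Set.Iic x)
  have hBs : Monotone Bs := fun x y h => clo_mono φ (Set.image_mono (Set.Iic_subset_Iic.2 h))
  let As : κ.ord.ToType → Set F := fun x => ⋃ y : Set.Iio x, Bs y
  have hAcl : ∀ x, Closed φ (As x) := fun x =>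
    Closed.iUnion h0 (fun y : Set.Iio x => Bs y) (fun y z h => hBs h) fun y => closed_clo φ _
  have hAlt : ∀ x, #(As x) < κ := by
    intro x
    refine (Cardinal.mk_le_mk_of_subset ?_).trans_lt (hclo (Set.Iio x) (hIio x))
    exact Set.iUnion_subset fun y => clo_mono φ (Set.image_mono (Set.Iic_subset_Iio.2 y.2))
  have hABs : ∀ x, As x ⊆ Bs x := fun x => Set.iUnion_subset fun y => hBs (le_of_lt y.2)
  have hPDA : ∀ x, PD R (Submodule.span R (As x)) (d + 1) := fun x =>
    key _ (hAcl x) (hAlt x)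
  have hPDB : ∀ x, PD R (Submodule.span R (Bs x)) (d + 1) := fun x =>
    key _ (closed_clo φ _) (hclo _ (hIic x))
  have hmain : PD R F (d + 1 + 1) := by
    refine pd_of_chain (ι := κ.ord.ToType) (fun x => Submodule.span R (As x))
      (fun x => Submodule.span R (Bs x)) (fun x => Submodule.span_mono (hABs x)) ?_ ?_ ?_ ?_
    · intro x y h
      exact Submodule.span_mono (Set.subset_iUnion (fun z : Set.Iio y => Bs z) ⟨x, h⟩)
    · intro x k hk
      obtain ⟨T, hT, hkT⟩ := Submodule.mem_span_finite_of_mem_span hk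
      rcases T.eq_empty_or_nonempty with rfl | hne
      · left; simpa using hkT
      · right
        obtain ⟨y, hy⟩ := exists_subset_of_finset (fun y : Set.Iio x => Bs y)
          (fun y z h => hBs h) T hT hne
        exact ⟨y, y.2, Submodule.span_mono hy hkT⟩
    · intro k
      have hk : k ∈ Submodule.span R S := by rw [hspan]; trivial
      obtain ⟨T, hT, hkT⟩ := Submodule.mem_span_finite_of_mem_span hk
      rcases T.eq_empty_or_nonempty with rfl | hne
      · left; simpa using hkT
      · right
        have hTB : (T : Set F) ⊆ ⋃ x, Bs x := by
          intro t ht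
          refine Set.mem_iUnion.2 ⟨e.symm ⟨t, hT ht⟩, subset_clo φ _ ⟨e.symm ⟨t, hT ht⟩,
            Set.mem_Iic.2 le_rfl, ?_⟩⟩
          simp [v]
        obtain ⟨y, hy⟩ := exists_subset_of_finset Bs hBs T hTB hne
        exact ⟨y, Submodule.span_mono hy hkT⟩
    · intro x
      exact pd_quot _ _ (Submodule.span_mono (hABs x)) (hPDA x) ((hPDB x).mono (by omega))
  exact pd_finitistic hR hmain

lemma pd_flat [IsNoetherianRing R] {d : ℕ} (hR : HasInjDimLE R R d)
    (F : Type u) [AddCommGroup F] [Module R F] (hF : Module.Flat R F) : PD R F (d + 1) :=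
  pd_flat_aux hR _ F hF Set.univ rfl Submodule.span_univ

end Closure

end GorFlat

/-- Over a commutative Noetherian ring of self-injective dimension at most `d`, every
module of finite flat dimension has projective dimension at most `d`. -/
theorem projDimLE_of_finite_flatDim_of_gorenstein
    (R : Type u) [CommRing R] [IsNoetherianRing R] (d : ℕ)
    (hR : HasInjDimLE R R d)
    (M : Type u) [AddCommGroup M] [Module R M]
    (hM : ∃ n : ℕ, HasFlatDimLE R M n) :
    HasProjDimLE R M d := by
  obtain ⟨n, hn⟩ := hM
  obtain ⟨k, hk⟩ := GorFlat.pd_of_hasFlatDimLE (fun F _ _ hF => GorFlat.pd_flat hR F hF) hn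
  exact GorFlat.HasProjDimLE.of_pd (GorFlat.pd_finitistic hR hk)
end

section
/- Let S be a commutative Noetherian ring of finite injective dimension as a module over itself, let I be an ideal of S, and let R = S/I. Then every R-module M of finite flat dimension over R has finite projective dimension over R. -/
/-!
If `S` is a commutative Noetherian ring of finite injective dimension as a module over
itself (a Gorenstein ring of finite Krull dimension) and `R = S/I` is a quotient of `S`,
then every `R`-module of finite flat dimension has finite projective dimension.
-/

universe u

open CategoryTheory

namespace FFD
open scoped TensorProduct
theorem surj_hom_tensor (A : Type u) [CommRing A] (N E G : Type u) [AddCommGroup N] [Module A N]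
    [AddCommGroup E] [Module A E] [AddCommGroup G] [Module A G]
    [Module.FinitePresentation A N] [Module.Flat A G] :
    Function.Surjective (TensorProduct.rTensorHomToHomRTensor (.id A) N E G) := by
  intro f
  obtain ⟨n, K, e, hK⟩ := Module.FinitePresentation.exists_fin A N
  obtain ⟨m, g, hg⟩ := (K.fg_iff_exists_fin_linearMap).mp hK
  let a : (Fin n → A) →ₗ[A] N := e.symm.toLinearMap ∘ₗ K.mkQ
  have ha : Function.Surjective a := e.symm.surjective.comp K.mkQ_surjective
  have hag : Function.Exact g a := by
    rw [LinearMap.exact_iff, hg]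
    simp [a, LinearMap.ker_comp]
  have ex : Function.Exact (LinearMap.lcomp A E a) (LinearMap.lcomp A E g) := by
    intro φ
    constructor
    · intro h
      have h1 : LinearMap.ker a ≤ LinearMap.ker φ := by
        rw [LinearMap.exact_iff.mp hag]
        rintro _ ⟨x, rfl⟩
        exact LinearMap.congr_fun h x
      refine ⟨(LinearMap.ker a).liftQ φ h1 ∘ₗ (a.quotKerEquivOfSurjective ha).symm.toLinearMap, ?_⟩
      apply LinearMap.ext; intro x
      have : (a.quotKerEquivOfSurjective ha).symm (a x) = (LinearMap.ker a).mkQ x := by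
        rw [LinearEquiv.symm_apply_eq]; rfl
      simp [this]
    · rintro ⟨ψ, rfl⟩
      apply LinearMap.ext; intro x
      simp [hag.apply_apply_eq_zero]
  have ex2 := Module.Flat.rTensor_exact G ex
  let z := (rTensorHomEquivHomRTensor A (Fin n → A) E G).symm (f ∘ₗ a)
  have hz : TensorProduct.rTensorHomToHomRTensor (.id A) _ _ _ z = f ∘ₗ a := by
    rw [← rTensorHomEquivHomRTensor_apply]; simp [z]
  have natg : ∀ z, TensorProduct.rTensorHomToHomRTensor (.id A) _ _ _
      (LinearMap.rTensor G (LinearMap.lcomp A E g) z) =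
      (TensorProduct.rTensorHomToHomRTensor (.id A) _ _ _ z) ∘ₗ g := by
    intro z
    induction z with
    | zero => simp
    | add x y hx hy => rw [map_add, map_add, hx, hy, map_add, LinearMap.add_comp]
    | tmul x y => apply LinearMap.ext; intro t; simp
  have nata : ∀ z, TensorProduct.rTensorHomToHomRTensor (.id A) _ _ _
      (LinearMap.rTensor G (LinearMap.lcomp A E a) z) =
      (TensorProduct.rTensorHomToHomRTensor (.id A) _ _ _ z) ∘ₗ a := by
    intro z
    induction z with
    | zero => simp
    | add x y hx hy => rw [map_add, map_add, hx, hy, map_add, LinearMap.add_comp]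
    | tmul x y => apply LinearMap.ext; intro t; simp
  have h0 : LinearMap.rTensor G (LinearMap.lcomp A E g) z = 0 := by
    apply (rTensorHomEquivHomRTensor A (Fin m → A) E G).injective
    rw [rTensorHomEquivHomRTensor_apply, natg, hz, map_zero]
    apply LinearMap.ext; intro t
    simp [hag.apply_apply_eq_zero]
  obtain ⟨w, hw⟩ := (ex2 z).mp h0
  refine ⟨w, ?_⟩
  rw [← LinearMap.cancel_right ha, ← nata, hw, hz]

theorem injective_tensor_flat (A : Type u) [CommRing A] [IsNoetherianRing A] (E G : Type u)
    [AddCommGroup E] [Module A E] [AddCommGroup G] [Module A G]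
    [Module.Injective A E] [Module.Flat A G] : Module.Injective A (E ⊗[A] G) := by
  apply Module.Baer.injective
  intro I f
  have : Module.FinitePresentation A I := Module.finitePresentation_of_finite A I
  obtain ⟨w, hw⟩ := surj_hom_tensor A I E G f
  have hB : Function.Surjective (LinearMap.lcomp A E I.subtype) := by
    intro φ
    obtain ⟨ψ, hψ⟩ := Module.Injective.out I.subtype I.injective_subtype φ
    exact ⟨ψ, by ext x; exact hψ x⟩
  obtain ⟨v, hv⟩ := LinearMap.rTensor_surjective G hB w
  have nata : ∀ z, TensorProduct.rTensorHomToHomRTensor (.id A) _ _ _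
      (LinearMap.rTensor G (LinearMap.lcomp A E I.subtype) z) =
      (TensorProduct.rTensorHomToHomRTensor (.id A) _ _ _ z) ∘ₗ I.subtype := by
    intro z
    induction z with
    | zero => simp
    | add x y hx hy => rw [map_add, map_add, hx, hy, map_add, LinearMap.add_comp]
    | tmul x y => apply LinearMap.ext; intro t; simp
  refine ⟨TensorProduct.rTensorHomToHomRTensor (.id A) _ _ _ v, fun x hx => ?_⟩
  rw [← hw, ← hv, nata]; rfl

end FFD

namespace FFD
open scoped TensorProduct

/-- the module `N` is annihilated by the ideal `I` -/
def Killed {S : Type u} [CommRing S] (I : Ideal S) (N : Type u) [AddCommGroup N] [Module S N] :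
    Prop := ∀ a ∈ I, ∀ x : N, a • x = 0

/-- closed under extensions among modules killed by `I` -/
def ExtClosed {S : Type u} [CommRing S] (I : Ideal S)
    (C : (N : Type u) → [AddCommGroup N] → [Module S N] → Prop) : Prop :=
  ∀ (N₁ N₂ N₃ : Type u) [AddCommGroup N₁] [Module S N₁] [AddCommGroup N₂] [Module S N₂]
    [AddCommGroup N₃] [Module S N₃] (f : N₁ →ₗ[S] N₂) (g : N₂ →ₗ[S] N₃),
    Function.Injective f → Function.Surjective g → Function.Exact f g → Killed I N₂ →
    C N₁ → C N₃ → C N₂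

theorem Killed.of_inj {S : Type u} [CommRing S] {I : Ideal S} {N N' : Type u}
    [AddCommGroup N] [Module S N] [AddCommGroup N'] [Module S N'] (h : Killed I N')
    (f : N →ₗ[S] N') (hf : Function.Injective f) : Killed I N := by
  intro a ha x
  apply hf
  rw [map_smul, h a ha, map_zero]

theorem Killed.of_surj {S : Type u} [CommRing S] {I : Ideal S} {N N' : Type u}
    [AddCommGroup N] [Module S N] [AddCommGroup N'] [Module S N'] (h : Killed I N)
    (f : N →ₗ[S] N') (hf : Function.Surjective f) : Killed I N' := by
  intro a ha x
  obtain ⟨y, rfl⟩ := hf x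
  rw [← map_smul, h a ha, map_zero]

theorem Killed.mono {S : Type u} [CommRing S] {I J : Ideal S} {N : Type u}
    [AddCommGroup N] [Module S N] (h : Killed J N) (hIJ : I ≤ J) : Killed I N :=
  fun a ha x => h a (hIJ ha) x

theorem killed_quot {S : Type u} [CommRing S] (I : Ideal S) : Killed I (S ⧸ I) := by
  intro a ha x
  obtain ⟨y, rfl⟩ := Ideal.Quotient.mk_surjective x
  rw [Algebra.smul_def, Ideal.Quotient.algebraMap_eq, Ideal.Quotient.eq_zero_iff_mem.mpr ha,
    zero_mul]

theorem dev0 {S : Type u} [CommRing S] [IsNoetherianRing S] (I : Ideal S)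
    (C : (N : Type u) → [AddCommGroup N] → [Module S N] → Prop)
    (hz : ∀ (N : Type u) [AddCommGroup N] [Module S N] [Subsingleton N], C N)
    (hex : ExtClosed I C) (J : Ideal S) (hIJ : I ≤ J)
    (hJ : ∀ Q : Ideal S, Q.IsPrime → J ≤ Q → C (S ⧸ Q))
    (N : Type u) [AddCommGroup N] [Module S N] (hfin : Module.Finite S N) (hN : Killed J N) :
    C N := by
  revert hN
  induction hfin using IsNoetherianRing.induction_on_isQuotientEquivQuotientPrime S with
  | subsingleton N => intro _; exact hz N
  | quotient N p e =>
    intro hN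
    have h1 : Killed J (S ⧸ p.1) := hN.of_surj e.toLinearMap e.surjective
    refine hex (S ⧸ p.1) N PUnit e.symm.toLinearMap 0 e.symm.injective
      (Function.surjective_to_subsingleton _) ?_ (hN.mono hIJ) (hJ p.1 p.2 ?_) (hz _)
    · exact (e.symm.exact_zero_iff_surjective _).2 e.symm.surjective
    · intro a ha
      have := h1 a ha (Ideal.Quotient.mk p.1 1)
      rw [Algebra.smul_def, Ideal.Quotient.algebraMap_eq, ← map_mul, mul_one] at this
      exact Ideal.Quotient.eq_zero_iff_mem.mp this
  | exact N₁ N₂ N₃ f g hf hg hfg h₁ h₃ =>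
    intro hN
    exact hex N₁ N₂ N₃ f g hf hg hfg (hN.mono hIJ) (h₁ (hN.of_inj f hf)) (h₃ (hN.of_surj g hg))

theorem dev1 {S : Type u} [CommRing S] [IsNoetherianRing S] (I : Ideal S)
    (C : (N : Type u) → [AddCommGroup N] → [Module S N] → Prop)
    (hz : ∀ (N : Type u) [AddCommGroup N] [Module S N] [Subsingleton N], C N)
    (hex : ExtClosed I C) (P : Ideal S) (hIP : I ≤ P)
    (hP : ∀ Q : Ideal S, Q.IsPrime → P < Q → C (S ⧸ Q))
    (N : Type u) [AddCommGroup N] [Module S N] [Module.Finite S N] (hN : Killed P N)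
    (s : S) (hs : s ∉ P) (hsN : ∀ x : N, s • x = 0) :
    C N := by
  refine dev0 I C hz hex (P ⊔ Ideal.span {s}) (hIP.trans le_sup_left) ?_ N inferInstance ?_
  · intro Q hQ hPQ
    refine hP Q hQ (lt_of_le_of_ne (le_sup_left.trans hPQ) ?_)
    rintro rfl
    exact hs (hPQ (Ideal.mem_sup_right (Ideal.mem_span_singleton_self s)))
  · intro a ha x
    obtain ⟨y, hy, z, hz, rfl⟩ := Submodule.mem_sup.mp ha
    obtain ⟨c, rfl⟩ := Ideal.mem_span_singleton'.mp hz
    rw [add_smul, hN y hy, mul_smul, hsN, smul_zero, add_zero]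

theorem dev2 {S : Type u} [CommRing S] [IsNoetherianRing S] (I : Ideal S)
    (C : (N : Type u) → [AddCommGroup N] → [Module S N] → Prop)
    (h : ∀ Q : Ideal S, Q.IsPrime → I ≤ Q →
      (∀ Q' : Ideal S, Q'.IsPrime → Q < Q' → C (S ⧸ Q')) → C (S ⧸ Q)) :
    ∀ Q : Ideal S, Q.IsPrime → I ≤ Q → C (S ⧸ Q) := by
  intro Q
  induction Q using WellFoundedGT.induction with
  | ind Q ih =>
    intro hQ hIQ
    exact h Q hQ hIQ fun Q' hQ' hlt => ih Q' hlt hQ' (hIQ.trans hlt.le)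

/-- every element of `E` is killed by an element outside `P` -/
def Tors {S : Type u} [CommRing S] (P : Ideal S) (E : Type u) [AddCommGroup E] [Module S E] :
    Prop := ∀ x : E, ∃ s, s ∉ P ∧ s • x = 0

theorem Tors.exists_unif {S : Type u} [CommRing S] {P : Ideal S} (hP : P.IsPrime) {E : Type u}
    [AddCommGroup E] [Module S E] [hE : Module.Finite S E] (h : Tors P E) :
    ∃ s, s ∉ P ∧ ∀ x : E, s • x = 0 := by
  obtain ⟨t, ht⟩ := hE.fg_top
  choose s hs1 hs2 using h
  refine ⟨∏ y ∈ t, s y, fun hmem => ?_, fun x => ?_⟩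
  · obtain ⟨y, _, hy⟩ := (hP.prod_mem_iff).mp hmem
    exact hs1 y hy
  · have hx : x ∈ Submodule.span S (t : Set E) := by rw [ht]; trivial
    induction hx using Submodule.span_induction with
    | mem y hy =>
      obtain ⟨c, hc⟩ := Finset.dvd_prod_of_mem s hy
      rw [hc, mul_comm, mul_smul, hs2, smul_zero]
    | zero => simp
    | add x y _ _ hx hy => rw [smul_add, hx, hy, add_zero]
    | smul a x _ hx => rw [smul_comm, hx, smul_zero]

/-- Nakayama -/
theorem Tors.nakayama {S : Type u} [CommRing S] {P : Ideal S} (hP : P.IsPrime) {E : Type u}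
    [AddCommGroup E] [Module S E] [hE : Module.Finite S E] (x : S) (hx : x ∈ P)
    (h : ∀ y : E, ∃ s, s ∉ P ∧ ∃ z, s • y = x • z) : Tors P E := by
  let N : Submodule S E := LinearMap.range (LinearMap.lsmul S E x)
  have h1 : Tors P (E ⧸ N) := by
    intro y
    obtain ⟨y, rfl⟩ := N.mkQ_surjective y
    obtain ⟨s, hs, z, hz⟩ := h y
    refine ⟨s, hs, ?_⟩
    rw [← map_smul, hz]
    exact (Submodule.Quotient.mk_eq_zero N).mpr ⟨z, rfl⟩
  obtain ⟨s, hs, hsE⟩ := h1.exists_unif hP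
  have h2 : LinearMap.range (LinearMap.lsmul S E s) ≤ (Ideal.span {x}) • (⊤ : Submodule S E) := by
    rintro _ ⟨y, rfl⟩
    have := hsE (N.mkQ y)
    rw [← map_smul] at this
    obtain ⟨z, hz⟩ := (Submodule.Quotient.mk_eq_zero N).mp this
    simp only [LinearMap.lsmul_apply] at hz ⊢
    rw [← hz]
    exact Submodule.smul_mem_smul (Ideal.mem_span_singleton_self x) trivial
  obtain ⟨p, hp1, -, hp2, hp3⟩ := LinearMap.exists_monic_and_natDegree_eq_and_coeff_mem_pow_and_aeval_eq_zero
    S (LinearMap.lsmul S E s) (Ideal.span {x}) h2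
  have hle : Ideal.span {x} ≤ P := by rwa [Ideal.span_singleton_le_iff_mem]
  refine fun y => ⟨p.eval s, ?_, ?_⟩
  · intro hmem
    rw [Polynomial.eval_eq_sum_range, Finset.sum_range_succ] at hmem
    have h3 : ∑ i ∈ Finset.range p.natDegree, p.coeff i * s ^ i ∈ P := by
      refine P.sum_mem fun i hi => P.mul_mem_right _ (hle ?_)
      have := hp2 i
      exact Ideal.pow_le_self (by have := Finset.mem_range.mp hi; omega) this
    rw [P.add_mem_iff_right h3, hp1.coeff_natDegree, one_mul] at hmem
    exact hs (hP.mem_of_pow_mem _ hmem)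
  · have h4 : LinearMap.lsmul S E s = algebraMap S (Module.End S E) s := rfl
    rw [h4, Polynomial.aeval_algebraMap_apply, Polynomial.coe_aeval_eq_eval] at hp3
    exact LinearMap.congr_fun hp3 y

end FFD

namespace FFD
open scoped TensorProduct
open Abelian

/-- short complex from linear maps -/
abbrev sc {S : Type u} [CommRing S] {N₁ N₂ N₃ : Type u} [AddCommGroup N₁] [Module S N₁]
    [AddCommGroup N₂] [Module S N₂] [AddCommGroup N₃] [Module S N₃] (f : N₁ →ₗ[S] N₂)
    (g : N₂ →ₗ[S] N₃) (h : Function.Exact f g) : ShortComplex (ModuleCat.{u} S) :=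
  ShortComplex.mk (ModuleCat.ofHom f) (ModuleCat.ofHom g) (by
    ext x; exact h.apply_apply_eq_zero x)

theorem sc_exact {S : Type u} [CommRing S] {N₁ N₂ N₃ : Type u} [AddCommGroup N₁] [Module S N₁]
    [AddCommGroup N₂] [Module S N₂] [AddCommGroup N₃] [Module S N₃] (f : N₁ →ₗ[S] N₂)
    (g : N₂ →ₗ[S] N₃) (h : Function.Exact f g) (hf : Function.Injective f)
    (hg : Function.Surjective g) : (sc f g h).ShortExact := by
  have h1 : Mono (sc f g h).f := (ModuleCat.mono_iff_injective _).mpr hf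
  have h2 : Epi (sc f g h).g := (ModuleCat.epi_iff_surjective _).mpr hg
  exact { exact := (ShortComplex.ShortExact.moduleCat_exact_iff_function_exact _).mpr h }

/-- all `Ext` groups into `S` are torsion at `P` -/
def TP {S : Type u} [CommRing S] (P : Ideal S) (N : Type u) [AddCommGroup N] [Module S N] :
    Prop := ∀ i : ℕ, Tors P (Ext (ModuleCat.of S N) (ModuleCat.of S S) i)

theorem ext_smul_eq_zero_left {S : Type u} [CommRing S] {N M : Type u} [AddCommGroup N] [Module S N]
    [AddCommGroup M] [Module S M] (s : S) (hs : ∀ x : N, s • x = 0) {i : ℕ}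
    (x : Ext (ModuleCat.of S N) (ModuleCat.of S M) i) : s • x = 0 := by
  have h0 : s • (𝟙 (ModuleCat.of S N)) = 0 := by
    ext y; exact hs y
  have : s • x = (s • Ext.mk₀ (𝟙 (ModuleCat.of S N))).comp x (zero_add i) := by
    rw [Ext.smul_comp, Ext.mk₀_id_comp]
  rw [this, ← Ext.mk₀_smul, h0, Ext.mk₀_zero, Ext.zero_comp]

theorem TP_of_subsingleton {S : Type u} [CommRing S] {P : Ideal S} (hP : P.IsPrime) (N : Type u)
    [AddCommGroup N] [Module S N] [Subsingleton N] : TP P N := fun i x =>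
  ⟨1, fun h => hP.ne_top ((Ideal.eq_top_iff_one _).mpr h),
    ext_smul_eq_zero_left 1 (fun _ => Subsingleton.elim _ _) x⟩

theorem TP_ext {S : Type u} [CommRing S] {P : Ideal S} (hP : P.IsPrime) :
    ExtClosed ⊥ (fun N [AddCommGroup N] [Module S N] => TP P N) := by
  intro N₁ N₂ N₃ _ _ _ _ _ _ f g hf hg hfg _ h1 h3 i x
  have hS := sc_exact f g hfg hf hg
  obtain ⟨s, hs, hsx⟩ := h1 i ((Ext.mk₀ (sc f g hfg).f).comp x (zero_add i))
  rw [← Ext.comp_smul] at hsx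
  obtain ⟨y, hy⟩ := Ext.contravariant_sequence_exact₂ hS _ (s • x) hsx
  obtain ⟨t, ht, hty⟩ := h3 i y
  refine ⟨t * s, fun h => (hP.mem_or_mem h).elim ht hs, ?_⟩
  rw [mul_smul, ← hy, ← Ext.comp_smul, hty, Ext.comp_zero]

theorem TP_all {S : Type u} [CommRing S] [IsNoetherianRing S] {P : Ideal S} (hP : P.IsPrime)
    (h : TP P (S ⧸ P)) : False := by
  have key : ∀ Q : Ideal S, Q.IsPrime → ⊥ ≤ Q → TP P (S ⧸ Q) := by
    apply dev2 ⊥ (fun N [AddCommGroup N] [Module S N] => TP P N)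
    intro Q hQ _ ih
    by_cases hQP : Q ≤ P
    · by_cases hne : Q = P
      · subst hne; exact h
      obtain ⟨x, hxP, hxQ⟩ := SetLike.exists_of_lt (lt_of_le_of_ne hQP hne)
      let f : (S ⧸ Q) →ₗ[S] (S ⧸ Q) := LinearMap.lsmul S (S ⧸ Q) x
      have hf : Function.Injective f := by
        rw [injective_iff_map_eq_zero]
        intro y hy
        obtain ⟨y, rfl⟩ := Ideal.Quotient.mk_surjective y
        simp only [f, LinearMap.lsmul_apply] at hy
        rw [Algebra.smul_def, Ideal.Quotient.algebraMap_eq, ← map_mul,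
          Ideal.Quotient.eq_zero_iff_mem] at hy
        exact Ideal.Quotient.eq_zero_iff_mem.mpr ((hQ.mem_or_mem hy).resolve_left hxQ)
      let g := (LinearMap.range f).mkQ
      have hg : Function.Surjective g := Submodule.mkQ_surjective _
      have hfg : Function.Exact f g := LinearMap.exact_map_mkQ_range f
      have hK : TP P ((S ⧸ Q) ⧸ LinearMap.range f) := by
        refine dev1 ⊥ (fun N [AddCommGroup N] [Module S N] => TP P N)
          (fun N _ _ _ => TP_of_subsingleton hP N) (TP_ext hP) Q bot_le ih _
          ((killed_quot Q).of_surj g hg) x hxQ ?_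
        intro z
        obtain ⟨z, rfl⟩ := hg z
        rw [← map_smul]
        exact hfg.apply_apply_eq_zero z
      intro i
      have hSE := sc_exact f g hfg hf hg
      apply Tors.nakayama hP x hxP
      intro y
      obtain ⟨s, hs, hsy⟩ := hK (1 + i) (hSE.extClass.comp y rfl)
      rw [← Ext.comp_smul] at hsy
      obtain ⟨z, hz⟩ := Ext.contravariant_sequence_exact₁ hSE _ (s • y) rfl hsy
      refine ⟨s, hs, z, ?_⟩
      rw [← hz]
      have : (sc f g hfg).f = x • 𝟙 (ModuleCat.of S (S ⧸ Q)) := by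
        ext y; rfl
      rw [this, Ext.mk₀_smul, Ext.smul_comp]
      exact congrArg (x • ·) (Ext.mk₀_id_comp z)
    · obtain ⟨x, hxQ, hxP⟩ := SetLike.not_le_iff_exists.mp hQP
      exact fun i y => ⟨x, hxP, ext_smul_eq_zero_left x (killed_quot Q x hxQ) y⟩
  have h2 : TP P S := dev0 ⊥ (fun N [AddCommGroup N] [Module S N] => TP P N)
    (fun N _ _ _ => TP_of_subsingleton hP N) (TP_ext hP) ⊥ bot_le key S inferInstance (by
      intro a ha x
      rw [(Submodule.mem_bot S).mp ha, zero_smul])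
  obtain ⟨s, hs, hs0⟩ := h2 0 (Ext.mk₀ (𝟙 (ModuleCat.of S S)))
  rw [← Ext.mk₀_smul] at hs0
  have h3 : s • (𝟙 (ModuleCat.of S S)) = 0 := by
    apply (Ext.mk₀_bijective _ _).1
    rw [hs0, Ext.mk₀_zero]
  have h4 : s • (1 : S) = 0 := congrArg (fun φ => φ.hom (1 : S)) h3
  rw [smul_eq_mul, mul_one] at h4
  exact hs (h4 ▸ P.zero_mem)

end FFD

namespace FFD
open scoped TensorProduct
open Abelian

/-- closure properties used in the devissage -/
structure Good {S : Type u} [CommRing S] (I : Ideal S)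
    (C : (N : Type u) → [AddCommGroup N] → [Module S N] → Prop) : Prop where
  zero : ∀ (N : Type u) [AddCommGroup N] [Module S N] [Subsingleton N], C N
  ext : ExtClosed I C
  ker : ∀ (N₁ N₂ N₃ : Type u) [AddCommGroup N₁] [Module S N₁] [AddCommGroup N₂] [Module S N₂]
    [AddCommGroup N₃] [Module S N₃] (f : N₁ →ₗ[S] N₂) (g : N₂ →ₗ[S] N₃),
    Function.Injective f → Function.Surjective g → Function.Exact f g → Killed I N₂ →
    C N₂ → C N₃ → C N₁
  prod : ∀ (N₁ N₂ : Type u) [AddCommGroup N₁] [Module S N₁] [AddCommGroup N₂] [Module S N₂],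
    C (N₁ × N₂) → C N₂
  base : ∀ (P : Ideal S) [P.IsPrime], I ≤ P → ∀ (J : Type u) [AddCommGroup J] [Module S J]
    [Module.Injective S J], C ((S ⧸ P) →ₗ[S] J)

theorem Good.iso {S : Type u} [CommRing S] {I : Ideal S}
    {C : (N : Type u) → [AddCommGroup N] → [Module S N] → Prop} (hC : Good I C)
    {N N' : Type u} [AddCommGroup N] [Module S N] [AddCommGroup N'] [Module S N']
    (e : N ≃ₗ[S] N') (hK : Killed I N') (h : C N) : C N' :=
  hC.ext N N' PUnit e.toLinearMap 0 e.injective (Function.surjective_to_subsingleton _)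
    ((e.exact_zero_iff_surjective _).2 e.surjective) hK h (hC.zero _)

theorem stepTors {S : Type u} [CommRing S] {I : Ideal S}
    {C : (N : Type u) → [AddCommGroup N] → [Module S N] → Prop} (hC : Good I C)
    (P : Ideal S) (hP : P.IsPrime) (hIP : I ≤ P)
    (hT : ∀ (N : Type u) [AddCommGroup N] [Module S N] [Module.Finite S N], Killed P N →
      ∀ s : S, s ∉ P → (∀ x : N, s • x = 0) → C N)
    (X : Type u) [AddCommGroup X] [Module S X] (hX : Killed P X) (hCX : C X)
    (B : Submodule S X) [Module.Finite S (X ⧸ B)] (h : Tors P (X ⧸ B)) : C B := by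
  obtain ⟨s, hs, hs'⟩ := h.exists_unif hP
  exact hC.ker B X (X ⧸ B) B.subtype B.mkQ B.injective_subtype B.mkQ_surjective
    (LinearMap.exact_subtype_mkQ B) (hX.mono hIP) hCX
    (hT _ (hX.of_surj B.mkQ B.mkQ_surjective) s hs hs')

theorem stepNonTors {S : Type u} [CommRing S] [IsNoetherianRing S] {I : Ideal S}
    {C : (N : Type u) → [AddCommGroup N] → [Module S N] → Prop} (hC : Good I C)
    (P : Ideal S) (hP : P.IsPrime) (hIP : I ≤ P)
    (hT : ∀ (N : Type u) [AddCommGroup N] [Module S N] [Module.Finite S N], Killed P N →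
      ∀ s : S, s ∉ P → (∀ x : N, s • x = 0) → C N)
    (X : Type u) [AddCommGroup X] [Module S X] (hX : Killed P X) (hCX : C X)
    (B : Submodule S X) [Module.Finite S (X ⧸ B)] (h : ¬ Tors P (X ⧸ B)) :
    C (S ⧸ P) := by
  let 𝒮 : Set (Submodule S (X ⧸ B)) := {F | ¬ ∀ y : X ⧸ B, ∃ s, s ∉ P ∧ s • y ∈ F}
  have hne : 𝒮.Nonempty := ⟨⊥, fun hh => h fun y => by
    obtain ⟨s, hs, hs'⟩ := hh y
    exact ⟨s, hs, (Submodule.mem_bot S).mp hs'⟩⟩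
  obtain ⟨F, hF, hmax⟩ := set_has_maximal_iff_noetherian.mpr
    (inferInstance : IsNoetherian S (X ⧸ B)) 𝒮 hne
  have hF' : ∃ y : X ⧸ B, ∀ s, s ∉ P → s • y ∉ F := by
    by_contra hcon
    push Not at hcon
    exact hF fun y => by
      obtain ⟨s, hs⟩ := hcon y
      exact ⟨s, hs⟩
  obtain ⟨y, hy⟩ := hF'
  obtain ⟨x, rfl⟩ := B.mkQ_surjective y
  let B' := F.comap B.mkQ
  have hlift : P ≤ LinearMap.ker (LinearMap.toSpanSingleton S X x) := fun a ha => hX a ha x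
  let ψ : (S ⧸ P) →ₗ[S] X := Submodule.liftQ P (LinearMap.toSpanSingleton S X x) hlift
  have hψ : ∀ a : S, ψ (Ideal.Quotient.mk P a) = a • x := fun a => rfl
  let φ : (B' × (S ⧸ P)) →ₗ[S] X := LinearMap.coprod B'.subtype ψ
  have hφ : Function.Injective φ := by
    rw [injective_iff_map_eq_zero]
    rintro ⟨b, a⟩ hba
    obtain ⟨a, rfl⟩ := Ideal.Quotient.mk_surjective a
    have h1 : (b : X) + a • x = 0 := hba
    have h2 : a • B.mkQ x ∈ F := by
      have : a • B.mkQ x = - B.mkQ b := by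
        rw [← map_smul, ← map_neg, eq_neg_of_add_eq_zero_right h1]
      rw [this]; exact F.neg_mem b.2
    have h3 : a ∈ P := by
      by_contra hcon
      exact hy a hcon h2
    have h4 : a • x = 0 := hX a h3 x
    rw [h4, add_zero] at h1
    ext
    · exact h1
    · exact Ideal.Quotient.eq_zero_iff_mem.mpr h3
  have hBle : B ≤ LinearMap.range φ := by
    intro b hb
    have : b ∈ B' := by
      change B.mkQ b ∈ F
      rw [Submodule.mkQ_apply, (Submodule.Quotient.mk_eq_zero B).mpr hb]
      exact F.zero_mem
    exact ⟨(⟨b, this⟩, 0), by simp [φ]⟩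
  have : Module.Finite S (X ⧸ LinearMap.range φ) :=
    Module.Finite.of_surjective (Submodule.factor hBle) (Submodule.factor_surjective hBle)
  have htors : Tors P (X ⧸ LinearMap.range φ) := by
    have hlt : F < F ⊔ Submodule.span S {B.mkQ x} := by
      refine lt_of_le_of_ne le_sup_left fun heq => ?_
      have h1 : B.mkQ x ∈ F := by
        rw [heq]
        exact Submodule.mem_sup_right (Submodule.mem_span_singleton_self _)
      exact hy 1 (fun h => hP.ne_top ((Ideal.eq_top_iff_one _).mpr h)) (by rwa [one_smul])
    have hnm : (F ⊔ Submodule.span S {B.mkQ x}) ∉ 𝒮 := fun hh => hmax _ hh hlt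
    have hall := not_not.mp hnm
    intro z
    obtain ⟨z, rfl⟩ := Submodule.mkQ_surjective _ z
    obtain ⟨s, hs, hsz⟩ := hall (B.mkQ z)
    refine ⟨s, hs, ?_⟩
    rw [← map_smul]
    apply (Submodule.Quotient.mk_eq_zero _).mpr
    obtain ⟨f, hf, w, hw, hfw⟩ := Submodule.mem_sup.mp hsz
    obtain ⟨a, rfl⟩ := Submodule.mem_span_singleton.mp hw
    have hmem : s • z - a • x ∈ B' := by
      change B.mkQ _ ∈ F
      rw [map_sub, map_smul, map_smul, ← hfw, add_sub_cancel_right]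
      exact hf
    refine ⟨(⟨_, hmem⟩, Ideal.Quotient.mk P a), ?_⟩
    simp [φ, hψ]
  obtain ⟨s, hs, hs'⟩ := htors.exists_unif hP
  have h5 : C (B' × (S ⧸ P)) :=
    hC.ker _ X _ φ (LinearMap.range φ).mkQ hφ (Submodule.mkQ_surjective _)
      (LinearMap.exact_map_mkQ_range φ) (hX.mono hIP) hCX
      (hT _ (hX.of_surj _ (Submodule.mkQ_surjective _)) s hs hs')
  exact hC.prod _ _ h5

/-- the connecting map -/
noncomputable def conn {S : Type u} [CommRing S] (A : Type u) [AddCommGroup A] [Module S A]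
    {T : ShortComplex (ModuleCat.{u} S)} (hT : T.ShortExact) :
    (A →ₗ[S] T.X₃) →ₗ[S] Ext (ModuleCat.of S A) T.X₁ 1 where
  toFun φ := (Ext.mk₀ (ModuleCat.ofHom φ)).comp hT.extClass (zero_add 1)
  map_add' φ ψ := by rw [ModuleCat.ofHom_add, Ext.mk₀_add, Ext.add_comp]
  map_smul' s φ := by
    have : ModuleCat.ofHom (s • φ) = s • (ModuleCat.ofHom φ : ModuleCat.of S A ⟶ T.X₃) := rfl
    rw [this, Ext.mk₀_smul, Ext.smul_comp]; rfl

theorem killed_hom {S : Type u} [CommRing S] (P : Ideal S) (N : Type u) [AddCommGroup N]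
    [Module S N] : Killed P ((S ⧸ P) →ₗ[S] N) := by
  intro a ha φ
  apply LinearMap.ext
  intro x
  rw [LinearMap.smul_apply, ← map_smul, killed_quot P a ha, map_zero, LinearMap.zero_apply]

theorem exists_inj {S : Type u} [CommRing S] (N : Type u) [AddCommGroup N] [Module S N] :
    ∃ (J : ModuleCat.{u} S) (ι : N →ₗ[S] J), Injective J ∧ Function.Injective ι := by
  refine ⟨Injective.under (ModuleCat.of S N), (Injective.ι (ModuleCat.of S N)).hom,
    inferInstance, ?_⟩
  exact (ModuleCat.mono_iff_injective _).mp inferInstance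

theorem hom_claim {S : Type u} [CommRing S] [IsNoetherianRing S] {I : Ideal S}
    {C : (N : Type u) → [AddCommGroup N] → [Module S N] → Prop} (hC : Good I C)
    (P : Ideal S) (hP : P.IsPrime) (hIP : I ≤ P)
    (hT : ∀ (N : Type u) [AddCommGroup N] [Module S N] [Module.Finite S N], Killed P N →
      ∀ s : S, s ∉ P → (∀ x : N, s • x = 0) → C N) (n : ℕ) :
    ∀ (N : Type u) [AddCommGroup N] [Module S N]
      [HasInjectiveDimensionLT (ModuleCat.of S N) (n + 1)],
      (∀ i, Module.Finite S (Ext (ModuleCat.of S (S ⧸ P)) (ModuleCat.of S N) (i + 1))) →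
      C (S ⧸ P) ∨ (C ((S ⧸ P) →ₗ[S] N) ∧
        ∀ i, Tors P (Ext (ModuleCat.of S (S ⧸ P)) (ModuleCat.of S N) (i + 1))) := by
  have h1P : (1 : S) ∉ P := fun h => hP.ne_top ((Ideal.eq_top_iff_one _).mpr h)
  induction n with
  | zero =>
    intro N _ _ hN _
    have hinj : Injective (ModuleCat.of S N) := injective_iff_hasInjectiveDimensionLT_one.mpr hN
    have : Module.Injective S N := Module.injective_iff_injective_object S N |>.mpr hinj
    refine Or.inr ⟨hC.base P hIP N, fun i x => ⟨1, h1P, ?_⟩⟩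
    rw [Ext.eq_zero_of_injective x, smul_zero]
  | succ n ih =>
    intro N _ _ hN hfin
    obtain ⟨J, ι, hJ, hι⟩ := exists_inj (S := S) N
    have hJ' : Module.Injective S J := Module.injective_iff_injective_object S J |>.mpr hJ
    let π := (LinearMap.range ι).mkQ
    have hπ : Function.Surjective π := Submodule.mkQ_surjective _
    have hιπ : Function.Exact ι π := LinearMap.exact_map_mkQ_range ι
    have hTe := sc_exact ι π hιπ hι hπ
    have hN' : HasInjectiveDimensionLT (ModuleCat.of S (J ⧸ LinearMap.range ι)) (n + 1) :=
      (hTe.hasInjectiveDimensionLT_X₃_iff n hJ).mpr hN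
    let A := ModuleCat.of S (S ⧸ P)
    let N' := J ⧸ LinearMap.range ι
    -- the connecting maps
    let δ (i : ℕ) : Ext A (ModuleCat.of S N') i →ₗ[S] Ext A (ModuleCat.of S N) (i + 1) :=
      Ext.postcompOfLinear hTe.extClass S A rfl
    have hδs : ∀ i, Function.Surjective (δ i) := by
      intro i x
      obtain ⟨y, hy⟩ := Ext.covariant_sequence_exact₁ A hTe x (Ext.eq_zero_of_injective _) rfl
      exact ⟨y, hy⟩
    have hδi : ∀ i, Function.Injective (δ (i + 1)) := by
      intro i
      rw [injective_iff_map_eq_zero]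
      intro x hx
      obtain ⟨y, hy⟩ := Ext.covariant_sequence_exact₃ A hTe x rfl hx
      rw [← hy, Ext.eq_zero_of_injective y, Ext.zero_comp]
    have hfin' : ∀ i, Module.Finite S (Ext A (ModuleCat.of S N') (i + 1)) := fun i =>
      have := hfin (i + 1)
      Module.Finite.of_injective (δ (i + 1)) (hδi i)
    rcases ih N' hfin' with h | ⟨hCN', htor⟩
    · exact Or.inl h
    let δ₀ : ((S ⧸ P) →ₗ[S] N') →ₗ[S] Ext A (ModuleCat.of S N) 1 := conn (S ⧸ P) hTe
    have hδ₀ : Function.Surjective δ₀ := by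
      intro x
      obtain ⟨y, hy⟩ := hδs 0 x
      obtain ⟨φ, rfl⟩ := (Ext.mk₀_bijective _ _).2 y
      exact ⟨φ.hom, hy⟩
    have := hfin 0
    let B := LinearMap.ker δ₀
    let e : (((S ⧸ P) →ₗ[S] N') ⧸ B) ≃ₗ[S] Ext A (ModuleCat.of S N) 1 :=
      δ₀.quotKerEquivOfSurjective hδ₀
    have : Module.Finite S (((S ⧸ P) →ₗ[S] N') ⧸ B) := Module.Finite.equiv e.symm
    by_cases ht : Tors P (((S ⧸ P) →ₗ[S] N') ⧸ B)
    · refine Or.inr ⟨?_, ?_⟩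
      · have hB : C B := stepTors hC P hP hIP hT _ (killed_hom P N') hCN' B ht
        let π' : ((S ⧸ P) →ₗ[S] J) →ₗ[S] B :=
          LinearMap.codRestrict B (LinearMap.compRight S π) (by
            intro φ
            change (Ext.mk₀ (ModuleCat.ofHom φ ≫ (sc ι π hιπ).g)).comp hTe.extClass (zero_add 1) = 0
            rw [← Ext.mk₀_comp_mk₀, Ext.comp_assoc_of_second_deg_zero, hTe.comp_extClass,
              Ext.comp_zero])
        refine hC.ker _ _ _ (LinearMap.compRight S ι) π' ?_ ?_ ?_
          ((killed_hom P J).mono hIP) (hC.base P hIP J) hB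
        · intro φ ψ h
          apply LinearMap.ext; intro x
          exact hι (LinearMap.congr_fun h x)
        · rintro ⟨φ, hφ⟩
          obtain ⟨y, hy⟩ := Ext.covariant_sequence_exact₃ A hTe (Ext.mk₀ (ModuleCat.ofHom φ)) rfl hφ
          obtain ⟨ψ, rfl⟩ := (Ext.mk₀_bijective _ _).2 y
          rw [Ext.mk₀_comp_mk₀] at hy
          have := (Ext.mk₀_bijective _ _).1 hy
          refine ⟨ψ.hom, Subtype.ext ?_⟩
          exact congrArg (fun f => f.hom) this
        · intro φ
          constructor
          · intro h
            have h1 : π ∘ₗ φ = 0 := congrArg Subtype.val h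
            have h2 : ∀ x, φ x ∈ LinearMap.range ι := fun x =>
              (hιπ (φ x)).mp (LinearMap.congr_fun h1 x)
            refine ⟨(LinearEquiv.ofInjective ι hι).symm.toLinearMap ∘ₗ φ.codRestrict _ h2, ?_⟩
            apply LinearMap.ext; intro x
            change ι ((LinearEquiv.ofInjective ι hι).symm ⟨φ x, h2 x⟩) = φ x
            exact congrArg Subtype.val
              ((LinearEquiv.ofInjective ι hι).apply_symm_apply ⟨φ x, h2 x⟩)
          · rintro ⟨ψ, rfl⟩
            apply Subtype.ext
            apply LinearMap.ext; intro x
            exact hιπ.apply_apply_eq_zero (ψ x)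
      · rintro (_ | i) x
        · obtain ⟨s, hs, hs'⟩ := ht (e.symm x)
          exact ⟨s, hs, e.symm.injective (by rw [map_smul, hs', map_zero])⟩
        · obtain ⟨y, rfl⟩ := hδs (i + 1) x
          obtain ⟨s, hs, hs'⟩ := htor i y
          exact ⟨s, hs, by rw [← map_smul, hs', map_zero]⟩
    · exact Or.inl (stepNonTors hC P hP hIP hT _ (killed_hom P N') hCN' B ht)

theorem prime_step {S : Type u} [CommRing S] [IsNoetherianRing S] {I : Ideal S}
    {C : (N : Type u) → [AddCommGroup N] → [Module S N] → Prop} (hC : Good I C)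
    (n : ℕ) [HasInjectiveDimensionLT (ModuleCat.of S S) (n + 1)]
    (P : Ideal S) (hP : P.IsPrime) (hIP : I ≤ P)
    (ih : ∀ Q : Ideal S, Q.IsPrime → P < Q → C (S ⧸ Q)) : C (S ⧸ P) := by
  have hT : ∀ (N : Type u) [AddCommGroup N] [Module S N] [Module.Finite S N], Killed P N →
      ∀ s : S, s ∉ P → (∀ x : N, s • x = 0) → C N := fun N _ _ _ hN s hs hsN =>
    dev1 I C hC.zero hC.ext P hIP ih N hN s hs hsN
  have hfin : ∀ i, Module.Finite S (Ext (ModuleCat.of S (S ⧸ P)) (ModuleCat.of S S) (i + 1)) :=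
    fun i => ModuleCat.finite_ext _ _ _ _
  rcases hom_claim hC P hP hIP hT n S hfin with h | ⟨h0, htor⟩
  · exact h
  · have : Module.Finite S ((S ⧸ P) →ₗ[S] S) := inferInstance
    refine stepNonTors hC P hP hIP hT _ (killed_hom P S) h0 ⊥ fun ht => ?_
    refine TP_all hP ?_
    rintro (_ | i)
    · intro x
      obtain ⟨φ, rfl⟩ := (Ext.mk₀_bijective _ _).2 x
      obtain ⟨s, hs, hs'⟩ := ht (Submodule.mkQ _ φ.hom)
      refine ⟨s, hs, ?_⟩
      rw [← map_smul] at hs'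
      have h2 : s • φ.hom = 0 :=
        (Submodule.mem_bot S).mp ((Submodule.Quotient.mk_eq_zero _).mp hs')
      have h3 : s • φ = 0 := ModuleCat.hom_ext h2
      rw [← Ext.mk₀_smul, h3, Ext.mk₀_zero]
    · exact htor i

/-- devissage: the class contains all finite modules killed by `I` -/
theorem Good.all {S : Type u} [CommRing S] [IsNoetherianRing S] {I : Ideal S}
    {C : (N : Type u) → [AddCommGroup N] → [Module S N] → Prop} (hC : Good I C)
    (n : ℕ) [HasInjectiveDimensionLT (ModuleCat.of S S) (n + 1)] : C (S ⧸ I) :=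
  dev0 I C hC.zero hC.ext I le_rfl
    (dev2 I C fun Q hQ hIQ ih => prime_step hC n Q hQ hIQ ih) _ inferInstance (killed_quot I)

end FFD

namespace FFD
open scoped TensorProduct
open Abelian

theorem flat_ker {R : Type u} [CommRing R] {K L F : Type u} [AddCommGroup K] [Module R K]
    [AddCommGroup L] [Module R L] [AddCommGroup F] [Module R F] [Module.Flat R L] [Module.Flat R F]
    (f : K →ₗ[R] L) (g : L →ₗ[R] F) (hf : Function.Injective f) (hg : Function.Surjective g)
    (hfg : Function.Exact f g) : Module.Flat R K := by
  rw [Module.Flat.iff_rTensor_preserves_injective_linearMap'.{u, u, u}]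
  intro N N' _ _ _ _ h hh
  have h1 := LinearMap.lTensor_injective_of_exact_of_flat g hg f hf hfg N
  have h2 := Module.Flat.rTensor_preserves_injective_linearMap (M := L) h hh
  have h3 : (f.lTensor N') ∘ₗ (h.rTensor K) = (h.rTensor L) ∘ₗ (f.lTensor N) := by
    rw [LinearMap.lTensor_comp_rTensor, LinearMap.rTensor_comp_lTensor]
  have h4 : Function.Injective ((f.lTensor N') ∘ₗ (h.rTensor K)) := by
    rw [h3]; exact h2.comp h1
  exact Function.Injective.of_comp h4

/-- a free cover, as a short exact sequence of modules -/
theorem exists_cover (R : Type u) [CommRing R] (M : Type u) [AddCommGroup M] [Module R M] :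
    ∃ (L : ModuleCat.{u} R) (g : L →ₗ[R] M), Module.Projective R L ∧ Function.Surjective g :=
  ⟨ModuleCat.of R (M →₀ R), Finsupp.linearCombination R id, inferInstanceAs
    (Module.Projective R (M →₀ R)), Finsupp.linearCombination_id_surjective R M⟩

theorem ext_base {R A : Type u} [CommRing R] [CommRing A] [Algebra R A] (X : Type u)
    [AddCommGroup X] [Module R X] [Module A X] [IsScalarTower R A X] [Module.Injective A X]
    (k : ℕ) : ∀ (F : Type u) [AddCommGroup F] [Module R F] [Module.Flat R F]
    (x : Ext (ModuleCat.of R F) (ModuleCat.of R X) (k + 1)), x = 0 := by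
  induction k with
  | zero =>
    intro F _ _ _ x
    obtain ⟨L, g, hL, hg⟩ := exists_cover R F
    let f := (LinearMap.ker g).subtype
    have hf : Function.Injective f := Submodule.injective_subtype _
    have hfg : Function.Exact f g := LinearMap.exact_subtype_ker_map g
    have hSE := sc_exact f g hfg hf hg
    have : Projective (ModuleCat.of R L) := (IsProjective.iff_projective (P := L)).mp hL
    obtain ⟨y, rfl⟩ := Ext.contravariant_sequence_exact₃ hSE _ x
      (Ext.eq_zero_of_projective _) (n₀ := 0) rfl
    obtain ⟨φ, rfl⟩ := (Ext.mk₀_bijective _ _).2 y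
    let φ' : A ⊗[R] (LinearMap.ker g) →ₗ[A] X := LinearMap.liftBaseChange A φ.hom
    have hf' : Function.Injective (f.baseChange A) :=
      LinearMap.lTensor_injective_of_exact_of_flat g hg f hf hfg A
    obtain ⟨ψ, hψ⟩ := Module.Injective.out (f.baseChange A) hf' φ'
    let ψ' : L →ₗ[R] X := (ψ.restrictScalars R) ∘ₗ (TensorProduct.mk R A L 1)
    have h1 : φ = (sc f g hfg).f ≫ ModuleCat.ofHom ψ' := by
      apply ModuleCat.hom_ext
      apply LinearMap.ext
      intro z
      have := hψ (1 ⊗ₜ z)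
      rw [LinearMap.baseChange_tmul, LinearMap.liftBaseChange_one_tmul] at this
      exact this.symm
    rw [h1, ← Ext.mk₀_comp_mk₀, ← Ext.comp_assoc_of_third_deg_zero, hSE.extClass_comp,
      Ext.zero_comp]
  | succ k ih =>
    intro F _ _ _ x
    obtain ⟨L, g, hL, hg⟩ := exists_cover R F
    let f := (LinearMap.ker g).subtype
    have hf : Function.Injective f := Submodule.injective_subtype _
    have hfg : Function.Exact f g := LinearMap.exact_subtype_ker_map g
    have hSE := sc_exact f g hfg hf hg
    have : Projective (ModuleCat.of R L) := (IsProjective.iff_projective (P := L)).mp hL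
    have : Module.Flat R (LinearMap.ker g) := flat_ker f g hf hg hfg
    obtain ⟨y, rfl⟩ := Ext.contravariant_sequence_exact₃ hSE _ x
      (Ext.eq_zero_of_projective _) (n₀ := k + 1) (add_comm _ _)
    rw [ih _ y, Ext.comp_zero]

theorem compat {S : Type u} [CommRing S] (I : Ideal S) (G N : Type u) [AddCommGroup G]
    [AddCommGroup N] [Module S G] [Module S N] [Module (S ⧸ I) G] [Module (S ⧸ I) N]
    [IsScalarTower S (S ⧸ I) G] [IsScalarTower S (S ⧸ I) N] :
    TensorProduct.CompatibleSMul S (S ⧸ I) G N := by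
  constructor
  intro r m n
  obtain ⟨r, rfl⟩ := Ideal.Quotient.mk_surjective r
  have h1 : (Ideal.Quotient.mk I r) • m = r • m := algebraMap_smul (S ⧸ I) r m
  have h2 : (Ideal.Quotient.mk I r) • n = r • n := algebraMap_smul (S ⧸ I) r n
  rw [h1, h2, TensorProduct.smul_tmul]

/-- tensor products over `S` and `S ⧸ I` agree -/
noncomputable def tensEquiv {S : Type u} [CommRing S] (I : Ideal S) (G N : Type u) [AddCommGroup G]
    [AddCommGroup N] [Module S G] [Module S N] [Module (S ⧸ I) G] [Module (S ⧸ I) N]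
    [IsScalarTower S (S ⧸ I) G] [IsScalarTower S (S ⧸ I) N] :
    G ⊗[S ⧸ I] N ≃ₗ[S ⧸ I] G ⊗[S] N :=
  haveI := compat I G N
  TensorProduct.equivOfCompatibleSMul S (S ⧸ I) (S ⧸ I) G N

theorem lTensor_inj {S : Type u} [CommRing S] (I : Ideal S) (G N N' : Type u) [AddCommGroup G]
    [AddCommGroup N] [AddCommGroup N'] [Module S G] [Module S N] [Module S N'] [Module (S ⧸ I) G]
    [IsScalarTower S (S ⧸ I) G] [Module.Flat (S ⧸ I) G] (hN : Killed I N) (hN' : Killed I N')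
    (f : N →ₗ[S] N') (hf : Function.Injective f) : Function.Injective (f.lTensor G) := by
  have t1 : Module.IsTorsionBySet S N I := fun x a => hN a.1 a.2 x
  have t2 : Module.IsTorsionBySet S N' I := fun x a => hN' a.1 a.2 x
  letI := t1.module
  letI := t2.module
  haveI : IsScalarTower S (S ⧸ I) N := t1.isScalarTower
  haveI : IsScalarTower S (S ⧸ I) N' := t2.isScalarTower
  let f' : N →ₗ[S ⧸ I] N' := { f with
    map_smul' := fun r x => by
      obtain ⟨r, rfl⟩ := Ideal.Quotient.mk_surjective r
      exact f.map_smul r x }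
  have h1 := Module.Flat.lTensor_preserves_injective_linearMap (M := G) f' hf
  have h2 : ∀ z, f.lTensor G (tensEquiv I G N z) = tensEquiv I G N' (f'.lTensor G z) := by
    intro z
    induction z with
    | zero => simp
    | add x y hx hy => simp only [map_add, hx, hy]
    | tmul x y => rfl
  intro a b hab
  obtain ⟨a, rfl⟩ := (tensEquiv I G N).surjective a
  obtain ⟨b, rfl⟩ := (tensEquiv I G N).surjective b
  rw [h2, h2] at hab
  rw [h1 ((tensEquiv I G N').injective hab)]

/-- the class used in the devissage -/
def InG {S : Type u} [CommRing S] (I : Ideal S) (N : Type u) [AddCommGroup N] [Module S N] : Prop :=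
  ∃ n : ℕ, ∀ (F G : Type u) [AddCommGroup F] [Module (S ⧸ I) F] [Module.Flat (S ⧸ I) F]
    [AddCommGroup G] [Module S G] [Module (S ⧸ I) G] [IsScalarTower S (S ⧸ I) G]
    [Module.Flat (S ⧸ I) G] (k : ℕ), n < k →
    ∀ x : Ext (ModuleCat.of (S ⧸ I) F) (ModuleCat.of (S ⧸ I) (G ⊗[S] N)) k, x = 0

theorem InG.retract {S : Type u} [CommRing S] {I : Ideal S} {N N' : Type u} [AddCommGroup N]
    [Module S N] [AddCommGroup N'] [Module S N'] (h : InG I N') (i : N →ₗ[S] N') (p : N' →ₗ[S] N)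
    (hpi : p ∘ₗ i = LinearMap.id) : InG I N := by
  obtain ⟨n, hn⟩ := h
  refine ⟨n, fun F G _ _ _ _ _ _ _ _ k hk x => ?_⟩
  let i' := ModuleCat.ofHom (TensorProduct.AlgebraTensorModule.lTensor (S ⧸ I) G i)
  let p' := ModuleCat.ofHom (TensorProduct.AlgebraTensorModule.lTensor (S ⧸ I) G p)
  have hid : i' ≫ p' = 𝟙 _ := by
    apply ModuleCat.hom_ext
    change TensorProduct.AlgebraTensorModule.lTensor (S ⧸ I) G p ∘ₗ
      TensorProduct.AlgebraTensorModule.lTensor (S ⧸ I) G i = LinearMap.id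
    rw [← TensorProduct.AlgebraTensorModule.lTensor_comp, hpi,
      TensorProduct.AlgebraTensorModule.lTensor_id]
  have h1 := hn F G k hk (x.comp (Ext.mk₀ i') (add_zero k))
  have h2 : (x.comp (Ext.mk₀ i') (add_zero k)).comp (Ext.mk₀ p') (add_zero k) = x := by
    rw [Ext.comp_assoc_of_third_deg_zero, Ext.mk₀_comp_mk₀, hid, Ext.comp_mk₀_id]
  rw [← h2, h1, Ext.zero_comp]

section
variable {S : Type u} [CommRing S] {I : Ideal S} {N₁ N₂ N₃ : Type u} [AddCommGroup N₁]
    [Module S N₁] [AddCommGroup N₂] [Module S N₂] [AddCommGroup N₃] [Module S N₃]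
    (f : N₁ →ₗ[S] N₂) (g : N₂ →ₗ[S] N₃)

theorem tens_exact (hg : Function.Surjective g) (hfg : Function.Exact f g)
    (G : Type u) [AddCommGroup G] [Module S G]
    [Module (S ⧸ I) G] [IsScalarTower S (S ⧸ I) G] :
    Function.Exact (TensorProduct.AlgebraTensorModule.lTensor (S ⧸ I) G f)
      (TensorProduct.AlgebraTensorModule.lTensor (S ⧸ I) G g) :=
  lTensor_exact G hfg hg

theorem tens_ses (hf : Function.Injective f) (hg : Function.Surjective g)
    (hfg : Function.Exact f g) (hK : Killed I N₂) (G : Type u) [AddCommGroup G] [Module S G]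
    [Module (S ⧸ I) G] [IsScalarTower S (S ⧸ I) G] [Module.Flat (S ⧸ I) G] :
    (sc (TensorProduct.AlgebraTensorModule.lTensor (S ⧸ I) G f)
      (TensorProduct.AlgebraTensorModule.lTensor (S ⧸ I) G g)
      (tens_exact f g hg hfg G)).ShortExact := by
  apply sc_exact
  · exact lTensor_inj I G N₁ N₂ (hK.of_inj f hf) hK f hf
  · exact LinearMap.lTensor_surjective G hg

theorem InG.ext (hf : Function.Injective f) (hg : Function.Surjective g)
    (hfg : Function.Exact f g) (hK : Killed I N₂) (h1 : InG I N₁) (h3 : InG I N₃) :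
    InG I N₂ := by
  obtain ⟨n, hn⟩ := h1
  obtain ⟨m, hm⟩ := h3
  refine ⟨max n m, fun F G _ _ _ _ _ _ _ _ k hk x => ?_⟩
  have hSE := tens_ses f g hf hg hfg hK G
  obtain ⟨y, rfl⟩ := Ext.covariant_sequence_exact₂ _ hSE x
    (hm F G k (lt_of_le_of_lt (le_max_right _ _) hk) _)
  rw [hn F G k (lt_of_le_of_lt (le_max_left _ _) hk) y, Ext.zero_comp]

theorem InG.ker (hf : Function.Injective f) (hg : Function.Surjective g)
    (hfg : Function.Exact f g) (hK : Killed I N₂) (h2 : InG I N₂) (h3 : InG I N₃) :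
    InG I N₁ := by
  obtain ⟨n, hn⟩ := h2
  obtain ⟨m, hm⟩ := h3
  refine ⟨max n (m + 1), fun F G _ _ _ _ _ _ _ _ k hk x => ?_⟩
  have hSE := tens_ses f g hf hg hfg hK G
  obtain ⟨k, rfl⟩ : ∃ l, k = l + 1 := ⟨k - 1, by omega⟩
  obtain ⟨y, rfl⟩ := Ext.covariant_sequence_exact₁ _ hSE x
    (hn F G _ (by omega) _) rfl
  rw [hm F G k (by omega) y, Ext.zero_comp]

end

end FFD

namespace FFD
open scoped TensorProduct
open Abelian

theorem torsion_injective {S : Type u} [CommRing S] (P : Ideal S) (J : Type u) [AddCommGroup J]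
    [Module S J] [Module.Injective S J] :
    Module.Injective (S ⧸ P) (Submodule.torsionBySet S J P) := by
  constructor
  intro X Y _ _ _ _ f hf g
  letI : Module S X := Module.compHom X (Ideal.Quotient.mk P)
  letI : Module S Y := Module.compHom Y (Ideal.Quotient.mk P)
  have hX : ∀ (s : S) (x : X), s • x = Ideal.Quotient.mk P s • x := fun _ _ => rfl
  have hY : ∀ (s : S) (x : Y), s • x = Ideal.Quotient.mk P s • x := fun _ _ => rfl
  let f' : X →ₗ[S] Y := { f with map_smul' := fun s x => f.map_smul (Ideal.Quotient.mk P s) x }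
  let g' : X →ₗ[S] J :=
    { toFun := fun x => (g x : J)
      map_add' := fun x y => by rw [map_add]; rfl
      map_smul' := fun s x => by rw [hX, map_smul]; rfl }
  obtain ⟨h, hh⟩ := Module.Injective.out f' hf g'
  have hmem : ∀ y, h y ∈ Submodule.torsionBySet S J P := by
    intro y
    rw [Submodule.mem_torsionBySet_iff]
    rintro ⟨a, ha⟩
    change a • h y = 0
    rw [← map_smul, hY, Ideal.Quotient.eq_zero_iff_mem.mpr ha, zero_smul, map_zero]
  refine ⟨{ toFun := fun y => ⟨h y, hmem y⟩
            map_add' := fun x y => Subtype.ext (map_add h x y)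
            map_smul' := fun r y => ?_ }, fun x => Subtype.ext (hh x)⟩
  obtain ⟨r, rfl⟩ := Ideal.Quotient.mk_surjective r
  exact Subtype.ext (h.map_smul r y)

theorem base_torsion {S : Type u} [CommRing S] [IsNoetherianRing S] (I P : Ideal S) (hIP : I ≤ P)
    (E : Type u) [AddCommGroup E] [Module S E] [Module (S ⧸ P) E] [IsScalarTower S (S ⧸ P) E]
    [Module.Injective (S ⧸ P) E] : InG I E := by
  refine ⟨0, fun F G _ _ _ _ _ _ _ _ k hk x => ?_⟩
  letI : Algebra (S ⧸ I) (S ⧸ P) := (Ideal.Quotient.factor hIP).toAlgebra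
  letI : Module (S ⧸ I) E := Module.compHom E (algebraMap (S ⧸ I) (S ⧸ P))
  haveI : IsScalarTower (S ⧸ I) (S ⧸ P) E := IsScalarTower.of_algebraMap_smul fun _ _ => rfl
  haveI : IsScalarTower S (S ⧸ I) E := IsScalarTower.of_algebraMap_smul fun r x =>
    algebraMap_smul (S ⧸ P) r x
  have hinj : Module.Injective (S ⧸ P) (E ⊗[S ⧸ P] ((S ⧸ P) ⊗[S ⧸ I] G)) :=
    injective_tensor_flat _ _ _
  let e : (E ⊗[S ⧸ P] ((S ⧸ P) ⊗[S ⧸ I] G)) ≃ₗ[S ⧸ I] G ⊗[S] E :=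
    ((TensorProduct.AlgebraTensorModule.cancelBaseChange (S ⧸ I) (S ⧸ P) (S ⧸ P) E G).restrictScalars
      (S ⧸ I)) ≪≫ₗ
      (TensorProduct.comm (S ⧸ I) E G) ≪≫ₗ tensEquiv I G E
  obtain ⟨k, rfl⟩ : ∃ l, k = l + 1 := ⟨k - 1, by omega⟩
  let i' := ModuleCat.ofHom e.symm.toLinearMap
  let p' := ModuleCat.ofHom e.toLinearMap
  have hid : i' ≫ p' = 𝟙 _ := by
    apply ModuleCat.hom_ext
    apply LinearMap.ext
    intro z
    exact e.apply_symm_apply z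
  have h1 := ext_base (A := S ⧸ P) (E ⊗[S ⧸ P] ((S ⧸ P) ⊗[S ⧸ I] G)) k F
    (x.comp (Ext.mk₀ i') (add_zero (k + 1)))
  have h2 : (x.comp (Ext.mk₀ i') (add_zero (k + 1))).comp (Ext.mk₀ p') (add_zero (k + 1)) = x := by
    rw [Ext.comp_assoc_of_third_deg_zero, Ext.mk₀_comp_mk₀, hid, Ext.comp_mk₀_id]
  rw [← h2, h1, Ext.zero_comp]

theorem base_hom {S : Type u} [CommRing S] [IsNoetherianRing S] (I P : Ideal S) (hIP : I ≤ P)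
    (J : Type u) [AddCommGroup J] [Module S J] [Module.Injective S J] :
    InG I ((S ⧸ P) →ₗ[S] J) := by
  have := torsion_injective P J
  have h : InG I (Submodule.torsionBySet S J P) := base_torsion I P hIP _
  let i : ((S ⧸ P) →ₗ[S] J) →ₗ[S] Submodule.torsionBySet S J P :=
    { toFun := fun φ => ⟨φ 1, by
        rw [Submodule.mem_torsionBySet_iff]
        rintro ⟨a, ha⟩
        change a • φ 1 = 0
        rw [← map_smul, killed_quot P a ha, map_zero]⟩
      map_add' := fun φ ψ => rfl
      map_smul' := fun s φ => rfl }
  have hi : Function.Bijective i := by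
    constructor
    · intro φ ψ h
      have h1 : φ 1 = ψ 1 := congrArg Subtype.val h
      apply LinearMap.ext
      intro x
      obtain ⟨x, rfl⟩ := Ideal.Quotient.mk_surjective x
      have : Ideal.Quotient.mk P x = x • (1 : S ⧸ P) := by
        rw [Algebra.smul_def, mul_one]; rfl
      rw [this, map_smul, map_smul, h1]
    · rintro ⟨y, hy⟩
      rw [Submodule.mem_torsionBySet_iff] at hy
      refine ⟨Submodule.liftQ P (LinearMap.toSpanSingleton S J y) fun a ha => hy ⟨a, ha⟩, ?_⟩
      apply Subtype.ext
      change (1 : S) • y = y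
      rw [one_smul]
  let e := LinearEquiv.ofBijective i hi
  exact h.retract e.toLinearMap e.symm.toLinearMap (by
    apply LinearMap.ext; intro z; exact e.symm_apply_apply z)

theorem good_InG {S : Type u} [CommRing S] [IsNoetherianRing S] (I : Ideal S) :
    Good I (fun N [AddCommGroup N] [Module S N] => InG I N) where
  zero N _ _ _ := by
    refine ⟨0, fun F G _ _ _ _ _ _ _ _ k hk x => ?_⟩
    have : Subsingleton (G ⊗[S] N) := subsingleton_of_forall_eq 0 fun z => by
      induction z with
      | zero => rfl
      | add x y hx hy => rw [hx, hy, add_zero]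
      | tmul x y => rw [Subsingleton.elim y 0, TensorProduct.tmul_zero]
    have h0 : 𝟙 (ModuleCat.of (S ⧸ I) (G ⊗[S] N)) = 0 := by
      apply ModuleCat.hom_ext
      apply LinearMap.ext
      intro z
      exact Subsingleton.elim _ _
    rw [← Ext.comp_mk₀_id x, h0, Ext.mk₀_zero, Ext.comp_zero]
  ext := fun _ _ _ _ _ _ _ _ _ f g hf hg hfg hK h1 h3 => InG.ext f g hf hg hfg hK h1 h3
  ker := fun _ _ _ _ _ _ _ _ _ f g hf hg hfg hK h1 h3 => InG.ker f g hf hg hfg hK h1 h3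
  prod N₁ N₂ _ _ _ _ h := h.retract (LinearMap.inr S N₁ N₂) (LinearMap.snd S N₁ N₂) (by
    apply LinearMap.ext; intro z; rfl)
  base P _ hIP J _ _ _ := base_hom I P hIP J

theorem ext_flat_flat {S : Type u} [CommRing S] [IsNoetherianRing S] (I : Ideal S)
    (n : ℕ) [HasInjectiveDimensionLT (ModuleCat.of S S) (n + 1)] :
    ∃ n : ℕ, ∀ (F G : Type u) [AddCommGroup F] [Module (S ⧸ I) F] [Module.Flat (S ⧸ I) F]
      [AddCommGroup G] [Module (S ⧸ I) G] [Module.Flat (S ⧸ I) G] (k : ℕ), n < k →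
      ∀ x : Ext (ModuleCat.of (S ⧸ I) F) (ModuleCat.of (S ⧸ I) G) k, x = 0 := by
  obtain ⟨m, hm⟩ := (good_InG I).all n
  refine ⟨m, fun F G _ _ _ _ _ _ k hk x => ?_⟩
  letI : Module S G := Module.compHom G (Ideal.Quotient.mk I)
  haveI : IsScalarTower S (S ⧸ I) G := IsScalarTower.of_algebraMap_smul fun _ _ => rfl
  let e : G ⊗[S] (S ⧸ I) ≃ₗ[S ⧸ I] G :=
    (tensEquiv I G (S ⧸ I)).symm ≪≫ₗ TensorProduct.rid (S ⧸ I) G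
  let i' := ModuleCat.ofHom e.symm.toLinearMap
  let p' := ModuleCat.ofHom e.toLinearMap
  have hid : i' ≫ p' = 𝟙 _ := by
    apply ModuleCat.hom_ext
    apply LinearMap.ext
    intro z
    exact e.apply_symm_apply z
  have h1 := hm F G k hk (x.comp (Ext.mk₀ i') (add_zero k))
  have h2 : (x.comp (Ext.mk₀ i') (add_zero k)).comp (Ext.mk₀ p') (add_zero k) = x := by
    rw [Ext.comp_assoc_of_third_deg_zero, Ext.mk₀_comp_mk₀, hid, Ext.comp_mk₀_id]
  rw [← h2, h1, Ext.zero_comp]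

end FFD

namespace FFD
open scoped TensorProduct
open Abelian

theorem flat_projDim {R : Type u} [CommRing R] (j : ℕ) : ∀ (F : Type u) [AddCommGroup F]
    [Module R F] [Module.Flat R F],
    (∀ (G : Type u) [AddCommGroup G] [Module R G] [Module.Flat R G]
      (x : Ext (ModuleCat.of R F) (ModuleCat.of R G) (j + 1)), x = 0) →
    HasProjectiveDimensionLT (ModuleCat.of R F) (j + 1) := by
  induction j with
  | zero =>
    intro F _ _ _ h
    obtain ⟨L, g, hL, hg⟩ := exists_cover R F
    let f := (LinearMap.ker g).subtype
    have hf : Function.Injective f := Submodule.injective_subtype _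
    have hfg : Function.Exact f g := LinearMap.exact_subtype_ker_map g
    have hSE := sc_exact f g hfg hf hg
    have : Module.Flat R (LinearMap.ker g) := flat_ker f g hf hg hfg
    obtain ⟨y, hy⟩ := Ext.covariant_sequence_exact₃ (ModuleCat.of R F) hSE
      (Ext.mk₀ (𝟙 _)) (zero_add 1) (h _ _)
    obtain ⟨φ, rfl⟩ := (Ext.mk₀_bijective _ _).2 y
    rw [Ext.mk₀_comp_mk₀] at hy
    have h1 := (Ext.mk₀_bijective _ _).1 hy
    have h2 : g ∘ₗ φ.hom = LinearMap.id := congrArg (fun f => f.hom) h1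
    have h3 : Module.Projective R F := Module.Projective.of_split φ.hom g h2
    exact projective_iff_hasProjectiveDimensionLT_one.mp
      ((IsProjective.iff_projective (P := F)).mp h3)
  | succ j ih =>
    intro F _ _ _ h
    obtain ⟨L, g, hL, hg⟩ := exists_cover R F
    let f := (LinearMap.ker g).subtype
    have hf : Function.Injective f := Submodule.injective_subtype _
    have hfg : Function.Exact f g := LinearMap.exact_subtype_ker_map g
    have hSE := sc_exact f g hfg hf hg
    have hpr : Projective (ModuleCat.of R L) := (IsProjective.iff_projective (P := L)).mp hL
    have : Module.Flat R (LinearMap.ker g) := flat_ker f g hf hg hfg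
    refine (hSE.hasProjectiveDimensionLT_X₃_iff j hpr).mpr (ih _ fun G _ _ _ x => ?_)
    obtain ⟨y, rfl⟩ := Ext.contravariant_sequence_exact₁ hSE _ x (n₁ := j + 1 + 1)
      (add_comm _ _) (h G _)
    rw [Ext.eq_zero_of_projective y, Ext.comp_zero]

theorem injDim_conv {S : Type u} [CommRing S] (n : ℕ) : ∀ (N : Type u) [AddCommGroup N]
    [Module S N], HasInjDimLE S N n → HasInjectiveDimensionLT (ModuleCat.of S N) (n + 1) := by
  induction n with
  | zero =>
    rintro N _ _ ⟨J, d, ι, hJ, hz, hι, h0, h1⟩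
    have hs := hz 1 (by omega)
    have hsurj : Function.Surjective ι := by
      rw [← LinearMap.range_eq_top, h0, eq_top_iff]
      intro x _
      exact Subsingleton.elim _ _
    let e := LinearEquiv.ofBijective ι ⟨hι, hsurj⟩
    have hinj : Module.Injective S N := by
      have := hJ 0
      constructor
      intro X Y _ _ _ _ f hf g
      obtain ⟨h, hh⟩ := Module.Injective.out f hf (ι ∘ₗ g)
      refine ⟨e.symm.toLinearMap ∘ₗ h, fun x => ?_⟩
      change e.symm (h (f x)) = g x
      rw [hh, LinearEquiv.symm_apply_eq]
      rfl
    exact injective_iff_hasInjectiveDimensionLT_one.mp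
      ((Module.injective_iff_injective_object S N).mp hinj)
  | succ n ih =>
    rintro N _ _ ⟨J, d, ι, hJ, hz, hι, h0, h1⟩
    have hfg : Function.Exact ι (d 0).rangeRestrict := by
      intro y
      have h : y ∈ LinearMap.range ι ↔ y ∈ LinearMap.ker (d 0) := by rw [h0]
      rw [← Subtype.val_inj]
      exact h.symm
    have hSE := sc_exact ι (d 0).rangeRestrict hfg hι (LinearMap.surjective_rangeRestrict _)
    have hinj : Injective (ModuleCat.of S (J 0)) :=
      (Module.injective_iff_injective_object S (J 0)).mp (hJ 0)
    refine (hSE.hasInjectiveDimensionLT_X₃_iff n hinj).mp (ih _ ?_)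
    exact ⟨fun i => J (i + 1), fun i => d (i + 1), (LinearMap.range (d 0)).subtype,
      fun i => hJ _, fun i hi => hz _ (by omega), Submodule.injective_subtype _,
      by rw [Submodule.range_subtype]; exact h1 0, fun i => h1 (i + 1)⟩

theorem flatDim_conv {R : Type u} [CommRing R] (m : ℕ)
    (hm : ∀ (F : Type u) [AddCommGroup F] [Module R F] [Module.Flat R F],
      HasProjectiveDimensionLT (ModuleCat.of R F) (m + 1)) (n : ℕ) :
    ∀ (M : Type u) [AddCommGroup M] [Module R M], HasFlatDimLE R M n →
      HasProjectiveDimensionLT (ModuleCat.of R M) (m + n + 1) := by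
  induction n with
  | zero =>
    rintro M _ _ ⟨F, d, ε, hF, hz, hε, h0, h1⟩
    have hs := hz 1 (by omega)
    have hinj : Function.Injective ε := by
      rw [← LinearMap.ker_eq_bot, ← h0, eq_bot_iff]
      rintro _ ⟨x, rfl⟩
      rw [Subsingleton.elim x 0, map_zero]
      exact Submodule.zero_mem _
    have := hF 0
    have : Module.Flat R M := Module.Flat.of_linearEquiv (LinearEquiv.ofBijective ε ⟨hinj, hε⟩).symm
    exact hm M
  | succ n ih =>
    rintro M _ _ ⟨F, d, ε, hF, hz, hε, h0, h1⟩
    have := hF 0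
    have hSE := sc_exact (LinearMap.ker ε).subtype ε (LinearMap.exact_subtype_ker_map ε)
      (Submodule.injective_subtype _) hε
    have hmem : ∀ x, d 0 x ∈ LinearMap.ker ε := fun x => h0 ▸ ⟨x, rfl⟩
    have hK : HasFlatDimLE R (LinearMap.ker ε) n := by
      refine ⟨fun i => F (i + 1), fun i => d (i + 1), (d 0).codRestrict _ hmem, fun i => hF _,
        fun i hi => hz _ (by omega), ?_, ?_, fun i => h1 (i + 1)⟩
      · rintro ⟨y, hy⟩
        rw [← h0] at hy
        obtain ⟨x, rfl⟩ := hy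
        exact ⟨x, rfl⟩
      · rw [LinearMap.ker_codRestrict]
        exact h1 0
    have h2 := hm (F 0)
    exact hSE.hasProjectiveDimensionLT_X₃ (m + n + 1) (ih _ hK)
      (hasProjectiveDimensionLT_of_ge _ (m + 1) _ (by omega))

/-- prepend a module to a sequence of modules -/
def consP {R : Type u} [CommRing R] (L : ModuleCat.{u} R) (P : ℕ → ModuleCat.{u} R) :
    ℕ → ModuleCat.{u} R
  | 0 => L
  | i + 1 => P i

/-- prepend a map to a sequence of linear maps -/
def consD {R : Type u} [CommRing R] (L : ModuleCat.{u} R) (P : ℕ → ModuleCat.{u} R)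
    (d : ∀ i : ℕ, P (i + 1) →ₗ[R] P i) (ε : P 0 →ₗ[R] L) :
    ∀ i : ℕ, consP L P (i + 1) →ₗ[R] consP L P i
  | 0 => ε
  | i + 1 => d i

theorem projDim_conv {R : Type u} [CommRing R] (n : ℕ) :
    ∀ (M : Type u) [AddCommGroup M] [Module R M],
      HasProjectiveDimensionLT (ModuleCat.of R M) (n + 1) → HasProjDimLE R M n := by
  induction n with
  | zero =>
    intro M _ _ h
    have hM : Module.Projective R M :=
      (IsProjective.iff_projective (P := M)).mpr (projective_iff_hasProjectiveDimensionLT_one.mpr h)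
    refine ⟨fun i => Nat.casesOn i (ModuleCat.of R M) (fun _ => ModuleCat.of R PUnit.{u + 1}),
      fun i => 0, LinearMap.id, ?_, ?_, Function.surjective_id, ?_, ?_⟩
    · rintro (_ | i)
      · exact hM
      · exact inferInstanceAs (Module.Projective R PUnit.{u + 1})
    · rintro (_ | i) hi
      · omega
      · exact inferInstanceAs (Subsingleton PUnit.{u + 1})
    · rw [LinearMap.range_zero]; exact LinearMap.ker_id.symm
    · intro i
      have : Subsingleton (Submodule R PUnit.{u + 1}) := inferInstance
      exact @Subsingleton.elim _ this _ _
  | succ n ih =>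
    intro M _ _ h
    obtain ⟨L, g, hL, hg⟩ := exists_cover R M
    have hSE := sc_exact (LinearMap.ker g).subtype g (LinearMap.exact_subtype_ker_map g)
      (Submodule.injective_subtype _) hg
    have hpr : Projective (ModuleCat.of R L) := (IsProjective.iff_projective (P := L)).mp hL
    obtain ⟨P, d, ε, hP, hz, hε, h0, h1⟩ :=
      ih _ ((hSE.hasProjectiveDimensionLT_X₃_iff n hpr).mp h)
    let P' := consP (ModuleCat.of R L) P
    let d' := consD (ModuleCat.of R L) P d ((LinearMap.ker g).subtype ∘ₗ ε)
    refine ⟨P', d', g, ?_, ?_, hg, ?_, ?_⟩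
    · rintro (_ | i)
      · exact hL
      · exact hP i
    · rintro (_ | i) hi
      · omega
      · exact hz i (by omega)
    · change LinearMap.range ((LinearMap.ker g).subtype ∘ₗ ε) = _
      rw [LinearMap.range_comp, LinearMap.range_eq_top.mpr hε, Submodule.map_top,
        Submodule.range_subtype]
      rfl
    · rintro (_ | i)
      · change LinearMap.range (d 0) = LinearMap.ker ((LinearMap.ker g).subtype ∘ₗ ε)
        rw [LinearMap.ker_comp, Submodule.ker_subtype, h0]
        rfl
      · exact h1 i

theorem main (S : Type u) [CommRing S] [IsNoetherianRing S]
    (hS : ∃ d : ℕ, HasInjDimLE S S d)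
    (I : Ideal S)
    (M : Type u) [AddCommGroup M] [Module (S ⧸ I) M]
    (hM : ∃ n : ℕ, HasFlatDimLE (S ⧸ I) M n) :
    ∃ m : ℕ, HasProjDimLE (S ⧸ I) M m := by
  obtain ⟨d, hd⟩ := hS
  obtain ⟨n, hn⟩ := hM
  have := injDim_conv d S hd
  obtain ⟨m, hm⟩ := ext_flat_flat I d
  exact ⟨m + n, projDim_conv _ _ (flatDim_conv m
    (fun F _ _ _ => flat_projDim m F fun G _ _ _ x => hm F G (m + 1) (by omega) x) n M hn)⟩

end FFD

/-- Over a homomorphic image `R = S ⧸ I` of a commutative Noetherian ring `S` of finite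
self-injective dimension, every `R`-module of finite flat dimension has finite
projective dimension. -/
theorem finite_projDim_of_finite_flatDim_over_quotient_of_gorenstein
    (S : Type u) [CommRing S] [IsNoetherianRing S]
    (hS : ∃ d : ℕ, HasInjDimLE S S d)
    (I : Ideal S)
    (M : Type u) [AddCommGroup M] [Module (S ⧸ I) M]
    (hM : ∃ n : ℕ, HasFlatDimLE (S ⧸ I) M n) :
    ∃ m : ℕ, HasProjDimLE (S ⧸ I) M m := by
  exact FFD.main S hS I M hM
end
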